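/- arXiv:1604.00888 — 7 statements merged into one kernel-verified Lean document; each statement's English description precedes it below -/
import Mathlib

section
/- Let G be a finite simple graph with at least 3 vertices. If the minimum degree δ(G) is at least the bipartite-hole-number α̃(G), then G is Hamiltonian. -/
/-- An `(s, t)`-bipartite-hole in a graph `G` consists of two disjoint sets of vertices
`S` and `T` with `|S| = s` and `|T| = t` such that there are no edges between `S` and `T`. -/
def SimpleGraph.HasBipartiteHole {V : Type*} (G : SimpleGraph V) (s t : ℕ) : Prop :=
  ∃ S T : Finset V, Disjoint S T ∧ S.card = s ∧ T.card = t ∧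
    ∀ a ∈ S, ∀ b ∈ T, ¬ G.Adj a b

/-- The bipartite-hole-number `α̃(G)`: the least integer `r` which may be written as
`r = s + t - 1` for some positive integers `s` and `t` such that `G` does not contain an
`(s, t)`-bipartite-hole. -/
noncomputable def SimpleGraph.biHoleNumber {V : Type*} (G : SimpleGraph V) : ℕ :=
  sInf {r : ℕ | ∃ s t : ℕ, 0 < s ∧ 0 < t ∧ r = s + t - 1 ∧ ¬ G.HasBipartiteHole s t}

/-- A finite set of natural numbers has initial segments of every possible size. -/
lemma Finset.exists_card_filter_lt_eq {X : Finset ℕ} {s : ℕ} (hs : s ≤ X.card) :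
    ∃ k, {x ∈ X | x < k}.card = s := by
  induction s with
  | zero => exact ⟨0, by simp⟩
  | succ s ih =>
    obtain ⟨k, hk⟩ := ih (by omega)
    have hne : {x ∈ X | ¬ x < k}.Nonempty := by
      rw [← Finset.card_pos]
      have := Finset.card_filter_add_card_filter_not (s := X) (fun x => x < k)
      omega
    obtain ⟨j, hj, hjmin⟩ := Finset.exists_minimal hne
    rw [Finset.mem_filter] at hj
    refine ⟨j + 1, ?_⟩
    rw [← hk, ← Finset.card_insert_of_notMem (a := j) (by simp [hj.2])]
    congr 1
    ext x
    have := fun hx => hjmin (y := x) hx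
    simp only [Finset.mem_filter, Finset.mem_insert] at this ⊢
    grind

namespace SimpleGraph

variable {V : Type*} (G : SimpleGraph V)

/-- A bipartite hole shrinks to one with any prescribed smaller sides. -/
lemma HasBipartiteHole.of_card_le {s t : ℕ} {S T : Finset V} (hST : Disjoint S T)
    (hs : s ≤ S.card) (ht : t ≤ T.card) (hadj : ∀ a ∈ S, ∀ b ∈ T, ¬ G.Adj a b) :
    G.HasBipartiteHole s t := by
  obtain ⟨S', hS', rfl⟩ := Finset.exists_subset_card_eq hs
  obtain ⟨T', hT', rfl⟩ := Finset.exists_subset_card_eq ht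
  exact ⟨S', T', Finset.disjoint_of_subset_left hS' (Finset.disjoint_of_subset_right hT' hST),
    rfl, rfl, fun a ha b hb => hadj a (hS' ha) b (hT' hb)⟩

/-- A bipartite hole given by two disjoint sets of positions in a list without repetitions. -/
lemma HasBipartiteHole.of_getElem {l : List V} (hl : l.Nodup) {s t : ℕ} {I J : Finset ℕ}
    (hI : ∀ i ∈ I, i < l.length) (hJ : ∀ j ∈ J, j < l.length) (hIJ : Disjoint I J)
    (hs : s ≤ I.card) (ht : t ≤ J.card)
    (hadj : ∀ i ∈ I, ∀ j ∈ J, ∀ (hi : i < l.length) (hj : j < l.length), ¬ G.Adj l[i] l[j]) :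
    G.HasBipartiteHole s t := by
  classical
  let e (K : Finset ℕ) (hK : ∀ k ∈ K, k < l.length) : {k // k ∈ K} ↪ V :=
    ⟨fun k => l[k.1]'(hK k.1 k.2), fun a b hab => Subtype.ext ((hl.getElem_inj_iff).1 hab)⟩
  refine HasBipartiteHole.of_card_le G (S := I.attach.map (e I hI)) (T := J.attach.map (e J hJ))
    ?_ (by simpa using hs) (by simpa using ht) ?_
  · rw [Finset.disjoint_left]
    intro v hv hv'
    simp only [Finset.mem_map, Finset.mem_attach, true_and, Subtype.exists] at hv hv'
    obtain ⟨i, hi, rfl⟩ := hv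
    obtain ⟨j, hj, hij⟩ := hv'
    have : j = i := (hl.getElem_inj_iff).1 hij
    subst this
    exact Finset.disjoint_left.1 hIJ hi hj
  · intro a ha b hb
    simp only [Finset.mem_map, Finset.mem_attach, true_and, Subtype.exists] at ha hb
    obtain ⟨i, hi, rfl⟩ := ha
    obtain ⟨j, hj, rfl⟩ := hb
    exact hadj i hi j hj (hI i hi) (hJ j hj)

/-- The minimum in the definition of the bipartite-hole-number is attained. -/
lemma exists_not_hasBipartiteHole_of_biHoleNumber [Fintype V] :
    ∃ s t : ℕ, 0 < s ∧ 0 < t ∧ G.biHoleNumber = s + t - 1 ∧ ¬ G.HasBipartiteHole s t := by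
  refine Nat.sInf_mem
    (s := {r | ∃ s t : ℕ, 0 < s ∧ 0 < t ∧ r = s + t - 1 ∧ ¬ G.HasBipartiteHole s t})
    ⟨_, 1, Fintype.card V + 1, one_pos, Nat.succ_pos _, rfl, ?_⟩
  rintro ⟨S, T, -, -, hT, -⟩
  have := T.card_le_univ
  omega

variable [DecidableRel G.Adj]

/-- The number of consecutive pairs of a list that are not adjacent in `G`. -/
def breaks : List V → ℕ
  | a :: b :: l => (if G.Adj a b then 0 else 1) + breaks (b :: l)
  | _ => 0

lemma breaks_append : ∀ {l m : List V} (hl : l ≠ []) (hm : m ≠ []),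
    G.breaks (l ++ m) =
      G.breaks l + (if G.Adj (l.getLast hl) (m.head hm) then 0 else 1) + G.breaks m
  | [a], b :: m, _, _ => by simp [breaks]; rfl
  | a :: b :: l, m, _, hm => by
    have := breaks_append (l := b :: l) (by simp) hm
    simp only [List.cons_append] at this
    simp [breaks, this, add_assoc]

lemma breaks_reverse : ∀ l : List V, G.breaks l.reverse = G.breaks l
  | [] => rfl
  | [a] => rfl
  | a :: b :: l => by
    rw [List.reverse_cons, breaks_append G (by simp) (by simp), breaks_reverse (b :: l)]
    simp [breaks, G.adj_comm, add_comm]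

lemma isChain_of_breaks_eq_zero : ∀ {l : List V}, G.breaks l = 0 → l.IsChain G.Adj
  | [], _ => .nil
  | [a], _ => .singleton a
  | a :: b :: l, h => by
    have h' : G.Adj a b ∧ G.breaks (b :: l) = 0 := by simpa [breaks] using h
    exact .cons_cons h'.1 (isChain_of_breaks_eq_zero h'.2)

/-- The number of cyclically consecutive pairs of a list that are not adjacent in `G`. -/
def cyclicBreaks (l : List V) (hl : l ≠ []) : ℕ :=
  G.breaks l + if G.Adj (l.getLast hl) (l.head hl) then 0 else 1

lemma cyclicBreaks_append_comm {l m : List V} (hl : l ≠ []) (hm : m ≠ []) :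
    G.cyclicBreaks (l ++ m) (by simp [hl]) = G.cyclicBreaks (m ++ l) (by simp [hl]) := by
  simp only [cyclicBreaks, breaks_append G hl hm, breaks_append G hm hl,
    List.getLast_append_of_ne_nil _ hl, List.getLast_append_of_ne_nil _ hm,
    List.head_append_of_ne_nil hl, List.head_append_of_ne_nil hm]
  omega

lemma exists_append_of_breaks_ne_zero : ∀ {l : List V}, G.breaks l ≠ 0 →
    ∃ (m k : List V) (hm : m ≠ []) (hk : k ≠ []), l = m ++ k ∧ ¬ G.Adj (m.getLast hm) (k.head hk)
  | [], h => absurd rfl h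
  | [a], h => absurd rfl h
  | a :: b :: l, h => by
    by_cases hab : G.Adj a b
    · obtain ⟨m, k, hm, hk, hl, hadj⟩ :=
        exists_append_of_breaks_ne_zero (l := b :: l) (by simpa [breaks, hab] using h)
      exact ⟨a :: m, k, by simp, hk, by simp [hl], by rwa [List.getLast_cons hm]⟩
    · exact ⟨[a], b :: l, by simp, by simp, rfl, by simpa using hab⟩

/-- A cyclic arrangement with a non-adjacent consecutive pair can be rotated so that this pair
consists of the last and the first entry. -/
lemma exists_rotation_of_cyclicBreaks_ne_zero {l : List V} (hl : l ≠ [])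
    (h : G.cyclicBreaks l hl ≠ 0) : ∃ (m : List V) (hm : m ≠ []), m.Perm l ∧
      G.cyclicBreaks m hm = G.cyclicBreaks l hl ∧ ¬ G.Adj (m.getLast hm) (m.head hm) := by
  by_cases hadj : G.Adj (l.getLast hl) (l.head hl)
  · obtain ⟨m, k, hm, hk, rfl, hmk⟩ :=
      exists_append_of_breaks_ne_zero G (by simpa [cyclicBreaks, hadj] using h)
    refine ⟨k ++ m, by simp [hm], List.perm_append_comm, cyclicBreaks_append_comm G hk hm, ?_⟩
    rwa [List.getLast_append_of_ne_nil _ hm, List.head_append_of_ne_nil hk]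
  · exact ⟨l, hl, List.Perm.refl l, rfl, hadj⟩

section Exchange

variable {l m k : List V} (hl : l ≠ []) (hm : m ≠ []) (hk : k ≠ [])

lemma cyclicBreaks_append_reverse_lt
    (hend : ¬ G.Adj (m.getLast hm) (l.head hl)) (h₁ : G.Adj (l.head hl) (m.head hm))
    (h₂ : G.Adj (m.getLast hm) (l.getLast hl)) :
    G.cyclicBreaks (l ++ m.reverse) (by simp [hl]) < G.cyclicBreaks (l ++ m) (by simp [hl]) := by
  have hm' : m.reverse ≠ [] := by simpa using hm
  simp only [cyclicBreaks, breaks_append G hl hm, breaks_append G hl hm', breaks_reverse,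
    List.getLast_append_of_ne_nil _ hm, List.getLast_append_of_ne_nil _ hm',
    List.head_append_of_ne_nil hl, List.head_reverse, List.getLast_reverse, h₁.symm, h₂.symm, hend,
    if_true, if_false]
  omega

lemma cyclicBreaks_reverse_append_append_reverse_lt
    (hend : ¬ G.Adj (k.getLast hk) (l.head hl)) (h₁ : G.Adj (l.head hl) (m.head hm))
    (h₂ : G.Adj (k.getLast hk) (m.getLast hm)) (h₃ : G.Adj (l.getLast hl) (k.head hk)) :
    G.cyclicBreaks (l.reverse ++ (m ++ k.reverse)) (by simp [hl]) <
      G.cyclicBreaks (l ++ (m ++ k)) (by simp [hl]) := by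
  have hl' : l.reverse ≠ [] := by simpa using hl
  have hk' : k.reverse ≠ [] := by simpa using hk
  have hmk : m ++ k ≠ [] := by simp [hm]
  have hmk' : m ++ k.reverse ≠ [] := by simp [hm]
  simp only [cyclicBreaks, breaks_append G hl hmk, breaks_append G hm hk,
    breaks_append G hl' hmk', breaks_append G hm hk', breaks_reverse,
    List.getLast_append_of_ne_nil _ hmk, List.getLast_append_of_ne_nil _ hk,
    List.getLast_append_of_ne_nil _ hmk', List.getLast_append_of_ne_nil _ hk',
    List.head_append_of_ne_nil hl, List.head_append_of_ne_nil hl', List.head_append_of_ne_nil hm,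
    List.head_reverse, List.getLast_reverse, h₁, h₂.symm, h₃.symm, hend, if_true, if_false]
  omega

lemma cyclicBreaks_append_append_reverse_lt
    (hend : ¬ G.Adj (k.getLast hk) (l.head hl)) (h₁ : G.Adj (l.head hl) (m.getLast hm))
    (h₂ : G.Adj (k.getLast hk) (l.getLast hl)) (h₃ : G.Adj (k.head hk) (m.head hm)) :
    G.cyclicBreaks (m ++ (l ++ k.reverse)) (by simp [hl]) <
      G.cyclicBreaks (l ++ (m ++ k)) (by simp [hl]) := by
  have hk' : k.reverse ≠ [] := by simpa using hk
  have hmk : m ++ k ≠ [] := by simp [hm]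
  have hlk' : l ++ k.reverse ≠ [] := by simp [hl]
  simp only [cyclicBreaks, breaks_append G hl hmk, breaks_append G hm hk,
    breaks_append G hm hlk', breaks_append G hl hk', breaks_reverse,
    List.getLast_append_of_ne_nil _ hmk, List.getLast_append_of_ne_nil _ hk,
    List.getLast_append_of_ne_nil _ hlk', List.getLast_append_of_ne_nil _ hk',
    List.head_append_of_ne_nil hl, List.head_append_of_ne_nil hm,
    List.head_reverse, List.getLast_reverse, h₁.symm, h₂.symm, h₃, hend, if_true, if_false]
  omega

end Exchange

lemma not_adj_head_of_adj_getLast {l : List V} (hl : l ≠ [])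
    (hmin : ∀ (m : List V) (hm : m ≠ []), m.Perm l → G.cyclicBreaks l hl ≤ G.cyclicBreaks m hm)
    (hend : ¬ G.Adj (l.getLast hl) (l.head hl))
    {y : ℕ} (hy : y + 1 < l.length)
    (hyl : G.Adj (l.getLast hl) l[y]) : ¬ G.Adj (l.head hl) l[y + 1] := by
  intro hx
  have hA : l.take (y + 1) ≠ [] := by simp [hl]
  have hB : l.drop (y + 1) ≠ [] := by simpa using hy
  have hAB : l.take (y + 1) ++ l.drop (y + 1) = l := List.take_append_drop ..
  have hlt := cyclicBreaks_append_reverse_lt G hA hB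
    (by simpa [List.head_take] using hend) (by simpa [List.head_take] using hx)
    (by simpa [List.getLast_take, show y < l.length by omega] using hyl)
  simp only [hAB] at hlt
  refine absurd (hmin _ _ ?_) hlt.not_ge
  conv_rhs => rw [← hAB]
  exact (List.reverse_perm _).append_left _

lemma not_adj_pred_succ {l : List V} (hl : l ≠ [])
    (hmin : ∀ (m : List V) (hm : m ≠ []), m.Perm l → G.cyclicBreaks l hl ≤ G.cyclicBreaks m hm)
    (hend : ¬ G.Adj (l.getLast hl) (l.head hl))
    {x y : ℕ} (hx : 0 < x) (hxy : x ≤ y) (hy : y + 1 < l.length)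
    (hxl : G.Adj (l.head hl) l[x]) (hyl : G.Adj (l.getLast hl) l[y]) :
    ¬ G.Adj l[x - 1] l[y + 1] := by
  intro h
  have hA : l.take x ≠ [] := by simp [hl]; omega
  have hB : (l.drop x).take (y + 1 - x) ≠ [] := by simp; omega
  have hC : l.drop (y + 1) ≠ [] := by simpa using hy
  have hABC : l.take x ++ ((l.drop x).take (y + 1 - x) ++ l.drop (y + 1)) = l := by
    have : l.drop (y + 1) = (l.drop x).drop (y + 1 - x) := by
      rw [List.drop_drop]; congr 1; omega
    rw [this, List.take_append_drop, List.take_append_drop]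
  have hlt := cyclicBreaks_reverse_append_append_reverse_lt G hA hB hC
    (by simpa [List.head_take] using hend) (by simpa [List.head_take] using hxl)
    (by
      have h₁ : x + (y + 1 - x - 1) = y := by omega
      simpa [List.getLast_take, h₁, show y < l.length by omega] using hyl)
    (by simpa [List.getLast_take, show x - 1 < l.length by omega] using h)
  simp only [hABC] at hlt
  refine absurd (hmin _ _ ?_) hlt.not_ge
  conv_rhs => rw [← hABC]
  exact (List.reverse_perm _).append ((List.reverse_perm _).append_left _)

lemma not_adj_succ_succ {l : List V} (hl : l ≠ [])
    (hmin : ∀ (m : List V) (hm : m ≠ []), m.Perm l → G.cyclicBreaks l hl ≤ G.cyclicBreaks m hm)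
    (hend : ¬ G.Adj (l.getLast hl) (l.head hl))
    {x y : ℕ} (hxy : y < x) (hx : x + 1 < l.length)
    (hxl : G.Adj (l.head hl) l[x]) (hyl : G.Adj (l.getLast hl) l[y]) :
    ¬ G.Adj l[x + 1] l[y + 1] := by
  intro h
  have hA : l.take (y + 1) ≠ [] := by simp [hl]
  have hB : (l.drop (y + 1)).take (x - y) ≠ [] := by simp; omega
  have hC : l.drop (x + 1) ≠ [] := by simpa using hx
  have hABC : l.take (y + 1) ++ ((l.drop (y + 1)).take (x - y) ++ l.drop (x + 1)) = l := by
    have : l.drop (x + 1) = (l.drop (y + 1)).drop (x - y) := by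
      rw [List.drop_drop]; congr 1; omega
    rw [this, List.take_append_drop, List.take_append_drop]
  have hlt := cyclicBreaks_append_append_reverse_lt G hA hB hC
    (by simpa [List.head_take] using hend)
    (by
      have h₁ : y + 1 + (x - y - 1) = x := by omega
      simpa [List.getLast_take, List.head_take, h₁, show x < l.length by omega] using hxl)
    (by simpa [List.getLast_take, show y < l.length by omega] using hyl)
    (by simpa [List.head_take] using h)
  simp only [hABC] at hlt
  refine absurd (hmin _ _ ?_) hlt.not_ge
  conv_rhs => rw [← hABC]
  refine List.Perm.trans ?_ (List.perm_append_comm_assoc _ _ _)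
  exact ((List.reverse_perm _).append_left _).append_left _

section Hamiltonian

variable [Fintype V] [DecidableEq V]

/-- A cyclic arrangement of all vertices with as few non-adjacent consecutive pairs as possible
has adjacent ends, if `G` has no `(s, t)`-bipartite-hole and minimum degree at least `s + t - 1`. -/
lemma adj_getLast_head_of_minimal {s t : ℕ} (hs : 0 < s) (ht : 0 < t)
    (hole : ¬ G.HasBipartiteHole s t) (hdeg : s + t - 1 ≤ G.minDegree)
    {l : List V} (hl : l ≠ []) (hnodup : l.Nodup) (hmem : ∀ v, v ∈ l)
    (hmin : ∀ (m : List V) (hm : m ≠ []), m.Perm l →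
      G.cyclicBreaks l hl ≤ G.cyclicBreaks m hm) :
    G.Adj (l.getLast hl) (l.head hl) := by
  by_contra hend
  have hpos : 0 < l.length := List.length_pos_iff.2 hl
  let nbr (v : V) : Finset ℕ := {i ∈ Finset.range l.length | ∃ hi : i < l.length, G.Adj v l[i]}
  have hcard (v : V) : s + t - 1 ≤ (nbr v).card := by
    refine hdeg.trans ((G.minDegree_le_degree v).trans ?_)
    rw [← G.card_neighborFinset_eq_degree]
    refine Finset.card_le_card_of_injOn (fun w => l.idxOf w) ?_ ?_
    · intro w hw
      have hw' : l.idxOf w < l.length := List.idxOf_lt_length_of_mem (hmem w)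
      simp only [nbr, Finset.coe_filter, Finset.mem_range, Set.mem_ofPred_eq]
      exact ⟨hw', hw', by simpa using hw⟩
    · intro w _ w' _ h
      exact (List.idxOf_inj (hmem w)).1 h
  set X := nbr (l.head hl)
  set Y := nbr (l.getLast hl)
  have hXadj {x : ℕ} (hx : x ∈ X) : ∃ hx' : x < l.length, G.Adj (l.head hl) l[x] :=
    (Finset.mem_filter.1 hx).2
  have hYadj {y : ℕ} (hy : y ∈ Y) : ∃ hy' : y < l.length, G.Adj (l.getLast hl) l[y] :=
    (Finset.mem_filter.1 hy).2
  have hXpos {x : ℕ} (hx : x ∈ X) : 0 < x := by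
    obtain ⟨hx', h⟩ := hXadj hx
    rcases Nat.eq_zero_or_pos x with rfl | h0
    · rw [List.head_eq_getElem] at h
      exact absurd h G.irrefl
    · exact h0
  have hXlt {x : ℕ} (hx : x ∈ X) : x + 1 < l.length := by
    obtain ⟨hx', h⟩ := hXadj hx
    by_contra hlt
    obtain rfl : x = l.length - 1 := by omega
    rw [← List.getLast_eq_getElem hl] at h
    exact hend h.symm
  have hYlt {y : ℕ} (hy : y ∈ Y) : y + 1 < l.length := by
    obtain ⟨hy', h⟩ := hYadj hy
    by_contra hlt
    obtain rfl : y = l.length - 1 := by omega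
    rw [← List.getLast_eq_getElem hl] at h
    exact absurd h G.irrefl
  have hXcard : s + t - 1 ≤ X.card := hcard _
  have hYcard : s + t - 1 ≤ Y.card := hcard _
  obtain ⟨k, hk⟩ := Finset.exists_card_filter_lt_eq (X := X) (s := s) (by omega)
  have hXsplit := Finset.card_filter_add_card_filter_not (s := X) (fun x => x < k)
  have hYsplit := Finset.card_filter_add_card_filter_not (s := Y) (fun y => y < k)
  set X₁ := {x ∈ X | x < k}
  set X₂ := {x ∈ X | ¬ x < k}
  set Y₁ := {y ∈ Y | y < k}
  set Y₂ := {y ∈ Y | ¬ y < k}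
  have hX₁ : ∀ x ∈ X₁, x ∈ X ∧ x < k := by simp [X₁]
  have hX₂ : ∀ x ∈ X₂, x ∈ X ∧ k ≤ x := by simp [X₂]
  have hY₁ : ∀ y ∈ Y₁, y ∈ Y ∧ y < k := by simp [Y₁]
  have hY₂ : ∀ y ∈ Y₂, y ∈ Y ∧ k ≤ y := by simp [Y₂]
  have inj : Function.Injective fun i : ℕ => i + 1 := add_left_injective 1
  apply hole
  by_cases hY₂card : t ≤ Y₂.card
  · refine HasBipartiteHole.of_getElem G hnodup (I := X₁.image fun x => x - 1)
      (J := Y₂.image fun y => y + 1) ?_ ?_ ?_ ?_ ?_ ?_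
    · simp only [Finset.mem_image]
      rintro _ ⟨x, hx, rfl⟩
      have := hXlt (hX₁ x hx).1
      omega
    · simp only [Finset.mem_image]
      rintro _ ⟨y, hy, rfl⟩
      exact hYlt (hY₂ y hy).1
    · simp only [Finset.disjoint_left, Finset.mem_image]
      rintro _ ⟨x, hx, rfl⟩ ⟨y, hy, hxy⟩
      have := (hX₁ x hx).2
      have := (hY₂ y hy).2
      omega
    · rw [Finset.card_image_of_injOn, hk]
      intro x hx x' hx' h
      have := hXpos (hX₁ x hx).1
      have := hXpos (hX₁ x' hx').1
      simp only at h
      omega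
    · rwa [Finset.card_image_of_injective _ inj]
    · simp only [Finset.mem_image]
      rintro _ ⟨x, hx, rfl⟩ _ ⟨y, hy, rfl⟩ _ hj
      obtain ⟨hxX, hxk⟩ := hX₁ x hx
      obtain ⟨hyY, hyk⟩ := hY₂ y hy
      exact not_adj_pred_succ G hl hmin hend (hXpos hxX) (by omega) hj (hXadj hxX).2 (hYadj hyY).2
  · refine HasBipartiteHole.of_getElem G hnodup (I := Y₁.image fun y => y + 1)
      (J := insert 0 (X₂.image fun x => x + 1)) ?_ ?_ ?_ ?_ ?_ ?_
    · simp only [Finset.mem_image]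
      rintro _ ⟨y, hy, rfl⟩
      exact hYlt (hY₁ y hy).1
    · simp only [Finset.mem_insert, Finset.mem_image]
      rintro _ (rfl | ⟨x, hx, rfl⟩)
      · exact hpos
      · exact hXlt (hX₂ x hx).1
    · simp only [Finset.disjoint_left, Finset.mem_insert, Finset.mem_image]
      rintro _ ⟨y, hy, rfl⟩ (h | ⟨x, hx, hxy⟩)
      · omega
      · have := (hY₁ y hy).2
        have := (hX₂ x hx).2
        omega
    · rw [Finset.card_image_of_injective _ inj]
      omega
    · rw [Finset.card_insert_of_notMem (by simp), Finset.card_image_of_injective _ inj]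
      omega
    · simp only [Finset.mem_insert, Finset.mem_image]
      rintro _ ⟨y, hy, rfl⟩ _ (rfl | ⟨x, hx, rfl⟩) hi hj
      · rw [G.adj_comm, ← List.head_eq_getElem hl]
        exact not_adj_head_of_adj_getLast G hl hmin hend hi (hYadj (hY₁ y hy).1).2
      · obtain ⟨hyY, hyk⟩ := hY₁ y hy
        obtain ⟨hxX, hxk⟩ := hX₂ x hx
        rw [G.adj_comm]
        exact not_adj_succ_succ G hl hmin hend (by omega) hj (hXadj hxX).2 (hYadj hyY).2

lemma isHamiltonian_of_cyclicBreaks_eq_zero {l : List V} (hl : l ≠ []) (hnodup : l.Nodup)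
    (hmem : ∀ v, v ∈ l) (hcard : 3 ≤ Fintype.card V) (h : G.cyclicBreaks l hl = 0) :
    G.IsHamiltonian := by
  have h' : G.breaks l = 0 ∧ G.Adj (l.getLast hl) (l.head hl) := by
    simpa [cyclicBreaks] using h
  let p := Walk.ofSupport l hl (isChain_of_breaks_eq_zero G h'.1)
  have hp : p.support = l := Walk.support_ofSupport hl _
  have hpath : p.IsPath := Walk.IsPath.mk' (by rwa [hp])
  have hham : p.IsHamiltonian := hpath.isHamiltonian_of_mem fun v => by rw [hp]; exact hmem v
  have hlen := hham.length_eq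
  refine fun _ => ⟨_, Walk.cons h'.2 p, ?_⟩
  rw [Walk.isHamiltonianCycle_iff_isCycle_and_length_eq,
    Walk.isCycle_iff_isPath_tail_and_le_length]
  refine ⟨⟨by simpa using hpath, ?_⟩, ?_⟩ <;> rw [Walk.length_cons] <;> omega

end Hamiltonian

end SimpleGraph

theorem hamiltonian_of_minDegree_ge_biHoleNumber
    {V : Type*} [Fintype V] [DecidableEq V] (G : SimpleGraph V) [DecidableRel G.Adj]
    (hn : 3 ≤ Fintype.card V) (h : G.biHoleNumber ≤ G.minDegree) :
    G.IsHamiltonian := by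
  obtain ⟨s, t, hs, ht, hst, hole⟩ := G.exists_not_hasBipartiteHole_of_biHoleNumber
  have hne : (Finset.univ : Finset V).toList ≠ [] := by
    rw [← List.length_pos_iff, Finset.length_toList, Finset.card_univ]
    omega
  let arrangements := {l : List V // l ≠ [] ∧ l.Perm Finset.univ.toList}
  obtain ⟨⟨l, hl, hperm⟩, hmin⟩ := (measure fun l : arrangements =>
    G.cyclicBreaks l.1 l.2.1).wf.has_min Set.univ ⟨⟨_, hne, .refl _⟩, trivial⟩
  have hmem : ∀ v, v ∈ l := fun v => hperm.mem_iff.2 (by simp)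
  have hnodup : l.Nodup := hperm.nodup_iff.2 (Finset.nodup_toList _)
  refine G.isHamiltonian_of_cyclicBreaks_eq_zero hl hnodup hmem hn ?_
  by_contra hbreaks
  obtain ⟨m, hm, hml, heq, hend⟩ := G.exists_rotation_of_cyclicBreaks_ne_zero hl hbreaks
  refine hend (G.adj_getLast_head_of_minimal hs ht hole (hst ▸ h) hm (hml.nodup_iff.2 hnodup)
    (fun v => hml.mem_iff.2 (hmem v)) fun k hk hkm => ?_)
  rw [heq]
  exact not_lt.1 (hmin.2 ⟨k, hk, hkm.trans (hml.trans hperm)⟩ trivial)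
end

section
/- Let r ≥ 0 be an integer and let G be a finite simple graph with at least 3 vertices such that δ(G) ≥ (r + 1)·α̃(G) + 3r. Then G contains r + 1 Hamilton cycles that are pairwise edge-disjoint (their edge sets are pairwise disjoint). -/
namespace SimpleGraph

open Finset

variable {V : Type*}

/-- A list enumerating all vertices of `G` along a Hamilton path. -/
structure IsSpanningPath (G : SimpleGraph V) (l : List V) : Prop where
  nodup : l.Nodup
  mem : ∀ v, v ∈ l
  chain : l.IsChain G.Adj

/-- A list enumerating all vertices of `G` along a Hamilton cycle. -/
structure IsSpanningCycle (G : SimpleGraph V) (l : List V) : Prop extends G.IsSpanningPath l where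
  closing : ∀ x ∈ l.getLast?, ∀ y ∈ l.head?, G.Adj x y

theorem isChain_adj_reverse {G : SimpleGraph V} {l : List V} (h : l.IsChain G.Adj) :
    l.reverse.IsChain G.Adj :=
  List.isChain_reverse.2 (h.imp fun _ _ hab => hab.symm)

theorem HasBipartiteHole.of_le_card {G : SimpleGraph V} {s t : ℕ} {S T : Finset V}
    (hST : Disjoint S T) (hs : s ≤ #S) (ht : t ≤ #T) (hadj : ∀ a ∈ S, ∀ b ∈ T, ¬ G.Adj a b) :
    G.HasBipartiteHole s t := by
  obtain ⟨S', hS', rfl⟩ := exists_subset_card_eq hs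
  obtain ⟨T', hT', rfl⟩ := exists_subset_card_eq ht
  exact ⟨S', T', hST.mono hS' hT', rfl, rfl, fun a ha b hb => hadj a (hS' ha) b (hT' hb)⟩

theorem HasBipartiteHole.anti {G H : SimpleGraph V} (hGH : G ≤ H) {s t : ℕ}
    (h : H.HasBipartiteHole s t) : G.HasBipartiteHole s t := by
  obtain ⟨S, T, hST, hs, ht, hadj⟩ := h
  exact ⟨S, T, hST, hs, ht, fun a ha b hb hab => hadj a ha b hb (hGH hab)⟩

theorem HasBipartiteHole.symm {G : SimpleGraph V} {s t : ℕ}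
    (h : G.HasBipartiteHole s t) : G.HasBipartiteHole t s := by
  obtain ⟨S, T, hST, hs, ht, hadj⟩ := h
  exact ⟨T, S, hST.symm, ht, hs, fun a ha b hb hab => hadj b hb a ha hab.symm⟩

/-- The bipartite-hole-number of a finite graph is attained by some `s ≤ t`. -/
theorem exists_not_hasBipartiteHole [Fintype V] (G : SimpleGraph V) :
    ∃ s t : ℕ, 0 < s ∧ s ≤ t ∧ G.biHoleNumber = s + t - 1 ∧ ¬ G.HasBipartiteHole s t := by
  have hne : {r : ℕ | ∃ s t : ℕ, 0 < s ∧ 0 < t ∧ r = s + t - 1 ∧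
      ¬ G.HasBipartiteHole s t}.Nonempty := by
    refine ⟨_, Fintype.card V + 1, 1, by omega, one_pos, rfl, ?_⟩
    rintro ⟨S, -, -, hS, -⟩
    have := S.card_le_univ
    omega
  obtain ⟨s, t, hs, ht, hr, hole⟩ := Nat.sInf_mem hne
  rcases le_total s t with hst | hst
  · exact ⟨s, t, hs, hst, hr, hole⟩
  · exact ⟨t, s, ht, hst, by rw [add_comm]; exact hr, fun h => hole h.symm⟩

/-- Reversing both outer segments of a Hamilton path. -/
theorem IsSpanningPath.cycle_reverse_outer {G : SimpleGraph V} {A B C : List V}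
    (h : G.IsSpanningPath (A ++ B ++ C)) (hA : A ≠ []) (hB : B ≠ []) (hC : C ≠ [])
    (h₁ : ∀ x ∈ A.head?, ∀ y ∈ B.head?, G.Adj x y)
    (h₂ : ∀ x ∈ B.getLast?, ∀ y ∈ C.getLast?, G.Adj x y)
    (h₃ : ∀ x ∈ C.head?, ∀ y ∈ A.getLast?, G.Adj x y) :
    G.IsSpanningCycle (A.reverse ++ B ++ C.reverse) where
  nodup := by
    refine (List.Perm.nodup_iff ?_).1 h.nodup
    exact (A.reverse_perm.symm.append_right B).append C.reverse_perm.symm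
  mem v := by simpa using h.mem v
  chain := by
    have := h.chain
    rw [List.isChain_append, List.isChain_append] at this ⊢
    refine ⟨⟨isChain_adj_reverse this.1.1, this.1.2.1, ?_⟩, isChain_adj_reverse this.2.1, ?_⟩
    · simpa using h₁
    · simpa [List.getLast?_append_of_ne_nil _ hB] using h₂
  closing := by
    simpa [List.getLast?_append, List.head?_append, hA, hC] using h₃

/-- Swapping the two last segments of a Hamilton path and reversing the final one. -/
theorem IsSpanningPath.cycle_swap {G : SimpleGraph V} {A B C : List V}
    (h : G.IsSpanningPath (A ++ B ++ C)) (hA : A ≠ []) (hB : B ≠ []) (hC : C ≠ [])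
    (h₁ : ∀ x ∈ A.getLast?, ∀ y ∈ C.getLast?, G.Adj x y)
    (h₂ : ∀ x ∈ C.head?, ∀ y ∈ B.head?, G.Adj x y)
    (h₃ : ∀ x ∈ B.getLast?, ∀ y ∈ A.head?, G.Adj x y) :
    G.IsSpanningCycle (A ++ C.reverse ++ B) where
  nodup := by
    refine (List.Perm.nodup_iff ?_).1 h.nodup
    rw [List.append_assoc, List.append_assoc]
    exact (List.perm_append_comm.trans (C.reverse_perm.symm.append_right B)).append_left A
  mem v := by have := h.mem v; simp at this ⊢; tauto
  chain := by
    have := h.chain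
    rw [List.isChain_append, List.isChain_append] at this ⊢
    refine ⟨⟨this.1.1, isChain_adj_reverse this.2.1, ?_⟩, this.1.2.1, ?_⟩
    · simpa using h₁
    · simpa [List.getLast?_append_of_ne_nil, hC] using h₂
  closing := by
    simpa [List.getLast?_append_of_ne_nil, List.head?_append, hA, hB] using h₃

/-- Reversing the first segment of a Hamilton path. -/
theorem IsSpanningPath.cycle_reverse_left {G : SimpleGraph V} {A B : List V}
    (h : G.IsSpanningPath (A ++ B)) (hA : A ≠ []) (hB : B ≠ [])
    (h₁ : ∀ x ∈ A.head?, ∀ y ∈ B.head?, G.Adj x y)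
    (h₂ : ∀ x ∈ B.getLast?, ∀ y ∈ A.getLast?, G.Adj x y) :
    G.IsSpanningCycle (A.reverse ++ B) where
  nodup := (List.Perm.nodup_iff (A.reverse_perm.symm.append_right B)).1 h.nodup
  mem v := by simpa using h.mem v
  chain := by
    have := h.chain
    rw [List.isChain_append] at this ⊢
    exact ⟨isChain_adj_reverse this.1, this.2.1, by simpa using h₁⟩
  closing := by
    simpa [List.getLast?_append_of_ne_nil, List.head?_append, hA, hB] using h₂

theorem _root_.List.exists_append_append (l : List V) {i j : ℕ} (hi : 0 < i) (hij : i < j)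
    (hj : j < l.length) : ∃ A B C : List V, l = A ++ B ++ C ∧ A ≠ [] ∧ B ≠ [] ∧ C ≠ [] ∧
      A.head? = l[0]? ∧ A.getLast? = l[i - 1]? ∧ B.head? = l[i]? ∧ B.getLast? = l[j - 1]? ∧
      C.head? = l[j]? ∧ C.getLast? = l[l.length - 1]? := by
  refine ⟨l.take i, (l.take j).drop i, l.drop j, ?_, ?_, ?_, ?_, ?_, ?_, ?_, ?_, ?_, ?_⟩
  · have h : l.take i = (l.take j).take i := by rw [List.take_take, min_eq_left hij.le]
    rw [h, List.take_append_drop, List.take_append_drop]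
  all_goals grind [List.head?_eq_getElem?, List.take_eq_nil_iff,
    List.drop_eq_nil_iff]

theorem _root_.List.exists_append (l : List V) {i : ℕ} (hi : 0 < i)
    (hj : i < l.length) : ∃ A B : List V, l = A ++ B ∧ A ≠ [] ∧ B ≠ [] ∧
      A.head? = l[0]? ∧ A.getLast? = l[i - 1]? ∧ B.head? = l[i]? ∧
      B.getLast? = l[l.length - 1]? := by
  refine ⟨l.take i, l.drop i, (List.take_append_drop i l).symm, ?_, ?_, ?_, ?_, ?_, ?_⟩
  all_goals grind [List.head?_eq_getElem?, List.take_eq_nil_iff,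
    List.drop_eq_nil_iff]

theorem _root_.List.Nodup.length_eq_one_of_head?_eq_getLast? {l : List V} (hl : l.Nodup) {a : V}
    (hhead : l.head? = some a) (hlast : l.getLast? = some a) : l.length = 1 := by
  rcases l with _ | ⟨b, _ | ⟨c, l⟩⟩ <;> grind [List.mem_of_getLast?]

section Exchange

variable {G : SimpleGraph V} {l : List V} {f : ℕ → V}

/-- If a Hamilton path `f` of a non-Hamiltonian graph has an edge from its first vertex to `f i`
and one from its last vertex to `f k`, where `i ≤ k + 1`, then `f (i - 1)` and `f (k + 1)` are
not adjacent. -/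
theorem IsSpanningPath.not_adj_of_le (hl : G.IsSpanningPath l)
    (hno : ∀ l', ¬ G.IsSpanningCycle l') (hf : ∀ i < l.length, l[i]? = some (f i)) {i k : ℕ}
    (hi : 0 < i) (hik : i ≤ k + 1) (hk : k + 1 < l.length) (h0 : G.Adj (f 0) (f i))
    (hlast : G.Adj (f (l.length - 1)) (f k)) : ¬ G.Adj (f (i - 1)) (f (k + 1)) := by
  intro hadj
  rcases hik.eq_or_lt with rfl | hik
  · obtain ⟨A, B, hAB, hA, hB, eA, eA', eB, eB'⟩ := l.exists_append hi hk
    rw [hf _ (by omega)] at eA eA' eB eB'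
    rw [hAB] at hl
    exact hno _ (hl.cycle_reverse_left hA hB (by simpa [eA, eB] using h0)
      (by simpa [eA', eB'] using hlast))
  · obtain ⟨A, B, C, hABC, hA, hB, hC, eA, eA', eB, eB', eC, eC'⟩ :=
      l.exists_append_append hi hik hk
    rw [hf _ (by omega)] at eA eA' eB eB' eC eC'
    rw [hABC] at hl
    exact hno _ (hl.cycle_reverse_outer hA hB hC (by simpa [eA, eB] using h0)
      (by simpa [eB', eC'] using hlast.symm) (by simpa [eC, eA'] using hadj.symm))

/-- If a Hamilton path `f` of a non-Hamiltonian graph has an edge from its last vertex to `f a`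
and one from its first vertex to `f b`, where `a < b`, then `f (a + 1)` and `f (b + 1)` are
not adjacent. -/
theorem IsSpanningPath.not_adj_of_lt (hl : G.IsSpanningPath l)
    (hno : ∀ l', ¬ G.IsSpanningCycle l') (hf : ∀ i < l.length, l[i]? = some (f i)) {a b : ℕ}
    (hab : a < b) (hb : b + 1 < l.length) (hlast : G.Adj (f (l.length - 1)) (f a))
    (h0 : G.Adj (f 0) (f b)) : ¬ G.Adj (f (a + 1)) (f (b + 1)) := by
  intro hadj
  obtain ⟨A, B, C, hABC, hA, hB, hC, eA, eA', eB, eB', eC, eC'⟩ :=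
    l.exists_append_append a.succ_pos (Nat.succ_lt_succ hab) hb
  rw [hf _ (by omega)] at eA eA' eB eB' eC eC'
  rw [hABC] at hl
  exact hno _ (hl.cycle_swap hA hB hC (by simpa [eA', eC'] using hlast.symm)
    (by simpa [eC, eB] using hadj.symm) (by simpa [eB', eA] using h0.symm))

theorem card_le_card_filter_getElem [Fintype V] [DecidableEq V] [DecidableRel G.Adj] {d : ℕ}
    (hd : d ≤ G.minDegree) (hl : ∀ v, v ∈ l) (hf : ∀ i < l.length, l[i]? = some (f i)) (v : V) :
    d ≤ #{i ∈ range l.length | G.Adj v (f i)} := by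
  refine (hd.trans (G.minDegree_le_degree v)).trans ?_
  rw [← card_neighborFinset_eq_degree]
  refine (card_le_card (t := image f {i ∈ range l.length | G.Adj v (f i)}) ?_).trans
    card_image_le
  intro w hw
  obtain ⟨i, hi, rfl⟩ := List.getElem_of_mem (hl w)
  have hfi : f i = l[i] := by simpa [List.getElem?_eq_getElem hi] using (hf i hi).symm
  rw [mem_neighborFinset] at hw
  exact mem_image.2 ⟨i, by simpa [hi, hfi] using hw, hfi⟩

end Exchange

/-- A graph with a Hamilton path, minimum degree at least `s + t - 1` and no `(s, t)`-bipartite-hole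
has a Hamilton cycle. -/
theorem IsSpanningPath.exists_isSpanningCycle [Fintype V] {G : SimpleGraph V}
    [DecidableRel G.Adj] {l : List V} (hl : G.IsSpanningPath l) {s t : ℕ} (hs : 0 < s) (ht : 0 < t)
    (hd : s + t - 1 ≤ G.minDegree)
    (hole : ¬ G.HasBipartiteHole s t) : ∃ l', G.IsSpanningCycle l' := by
  classical
  by_contra! hno
  rcases isEmpty_or_nonempty V with hV | ⟨⟨v₀⟩⟩
  · exact hno l ⟨hl, fun x => isEmptyElim x⟩
  obtain ⟨f, hf⟩ : ∃ f : ℕ → V, ∀ i < l.length, l[i]? = some (f i) :=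
    ⟨fun i => l.getD i v₀, fun i hi => by simp [hi]⟩
  have hinj : ∀ i < l.length, ∀ j < l.length, f i = f j → i = j := fun i hi j hj hij =>
    (List.getElem?_inj hi hl.nodup).1 ((hf i hi).trans (hij ▸ (hf j hj).symm))
  have hpos : 0 < l.length := List.length_pos_of_mem (hl.mem v₀)
  have hends : ¬ G.Adj (f (l.length - 1)) (f 0) := by
    have h0 := hf 0 hpos
    have hlast := hf (l.length - 1) (by omega)
    rw [← List.head?_eq_getElem?] at h0
    rw [← List.getLast?_eq_getElem?] at hlast
    exact fun h => hno l ⟨hl, by simpa [h0, hlast] using h⟩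
  set n := l.length with hn
  set N₁ : Finset ℕ := {i ∈ range n | G.Adj (f 0) (f i)} with hN₁
  set N₂ : Finset ℕ := {i ∈ range n | G.Adj (f (n - 1)) (f i)} with hN₂
  have hc₁ : s + t - 1 ≤ #N₁ := card_le_card_filter_getElem (by omega) hl.mem hf _
  have hc₂ : s + t - 1 ≤ #N₂ := card_le_card_filter_getElem (by omega) hl.mem hf _
  have h₁ : ∀ i ∈ N₁, 0 < i ∧ i + 1 < n ∧ G.Adj (f 0) (f i) := by
    intro i hi
    simp only [hN₁, mem_filter, mem_range] at hi
    refine ⟨Nat.pos_of_ne_zero ?_, lt_of_le_of_ne hi.1 ?_, hi.2⟩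
    · rintro rfl; exact G.irrefl hi.2
    · intro h
      obtain rfl : i = n - 1 := by omega
      exact hends hi.2.symm
  have h₂ : ∀ i ∈ N₂, i + 1 < n ∧ G.Adj (f (n - 1)) (f i) := by
    intro i hi
    simp only [hN₂, mem_filter, mem_range] at hi
    refine ⟨lt_of_le_of_ne hi.1 ?_, hi.2⟩
    intro h
    obtain rfl : i = n - 1 := by omega
    exact G.irrefl hi.2
  have hex : ∃ q, s ≤ #{i ∈ N₁ | i < q + 1} := by
    refine ⟨n, ?_⟩
    rw [filter_true_of_mem fun i hi => by have := h₁ i hi; omega]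
    omega
  set q := Nat.find hex with hq
  have hq₁ : s ≤ #{i ∈ N₁ | i < q + 1} := Nat.find_spec hex
  have hq₀ : q ≠ 0 := by
    intro h0
    rw [h0, filter_false_of_mem fun i hi => by have := h₁ i hi; omega] at hq₁
    simp at hq₁; omega
  have hq₂ : #{i ∈ N₁ | i < q} < s := by
    have := Nat.find_min hex (m := q - 1) (by omega)
    rw [Nat.sub_add_cancel (by omega)] at this
    omega
  have hsplit₁ := card_filter_add_card_filter_not (s := N₁) (fun i => i < q)
  have hsplit₂ := card_filter_add_card_filter_not (s := N₂) (fun i => i < q - 1)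
  have hcard : ∀ (N : Finset ℕ) (g : ℕ → ℕ), Set.InjOn g N → (∀ i ∈ N, g i < n) →
      #(N.image fun i => f (g i)) = #N := fun N g hg hN => card_image_of_injOn
    fun i hi j hj hij => hg hi hj (hinj _ (hN i hi) _ (hN j hj) hij)
  by_cases hcase : t ≤ #{i ∈ N₂ | ¬ i < q - 1}
  · refine hole (.of_le_card (S := {i ∈ N₁ | i < q + 1}.image fun i => f (i - 1))
      (T := {i ∈ N₂ | ¬ i < q - 1}.image fun i => f (i + 1)) ?_ ?_ ?_ ?_)
    · simp only [Finset.disjoint_left, mem_image, mem_filter]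
      rintro _ ⟨i, ⟨hi, hiq⟩, rfl⟩ ⟨k, ⟨hk, hkq⟩, hik⟩
      have := hinj _ (h₂ k hk).1 _ (by have := h₁ i hi; omega) hik
      omega
    · rwa [hcard _ (fun i => i - 1)]
      · intro i hi j hj hij
        have := h₁ i (mem_filter.1 hi).1
        have := h₁ j (mem_filter.1 hj).1
        simp only at hij; omega
      · intro i hi
        have := h₁ i (mem_filter.1 hi).1
        omega
    · rwa [hcard _ (fun i => i + 1) (by intro i _ j _; simp)
        fun i hi => (h₂ i (mem_filter.1 hi).1).1]
    · simp only [mem_image, mem_filter]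
      rintro _ ⟨i, ⟨hi, hiq⟩, rfl⟩ _ ⟨k, ⟨hk, hkq⟩, rfl⟩
      exact hl.not_adj_of_le hno hf (h₁ i hi).1 (by omega) (h₂ k hk).1 (h₁ i hi).2.2 (h₂ k hk).2
  · refine hole (.of_le_card (S := {i ∈ N₂ | i < q - 1}.image fun i => f (i + 1))
      (T := {i ∈ N₁ | ¬ i < q}.image fun i => f (i + 1)) ?_ ?_ ?_ ?_)
    · simp only [Finset.disjoint_left, mem_image, mem_filter]
      rintro _ ⟨i, ⟨hi, hiq⟩, rfl⟩ ⟨k, ⟨hk, hkq⟩, hik⟩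
      have := hinj _ (h₁ k hk).2.1 _ (h₂ i hi).1 hik
      omega
    · rw [hcard _ (fun i => i + 1) (by intro i _ j _; simp)
        fun i hi => (h₂ i (mem_filter.1 hi).1).1]
      omega
    · rw [hcard _ (fun i => i + 1) (by intro i _ j _; simp)
        fun i hi => (h₁ i (mem_filter.1 hi).1).2.1]
      omega
    · simp only [mem_image, mem_filter]
      rintro _ ⟨a, ⟨ha, haq⟩, rfl⟩ _ ⟨b, ⟨hb, hbq⟩, rfl⟩
      exact hl.not_adj_of_lt hno hf (by omega) (h₁ b hb).2.1 (h₂ a ha).2 (h₁ b hb).2.2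

/-- A Hamilton cycle that uses at most one non-edge of `G` yields a Hamilton path of `G`. -/
theorem IsSpanningCycle.exists_isSpanningPath_of_sup_edge [Fintype V] {G : SimpleGraph V}
    (hn : 3 ≤ Fintype.card V) {u v : V} {l : List V} (hl : (G ⊔ edge u v).IsSpanningCycle l) :
    ∃ l', G.IsSpanningPath l' := by
  by_cases hG : l.IsChain G.Adj
  · exact ⟨l, hl.nodup, hl.mem, hG⟩
  obtain ⟨i, hi, hbad⟩ := List.exists_not_getElem_of_not_isChain hG
  obtain ⟨A, B, hAB, hA, hB, eA, eA', eB, eB'⟩ := l.exists_append i.succ_pos hi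
  have hchain := hl.chain
  have hxy := List.isChain_iff_getElem.1 hchain i hi
  have hnodup := hl.nodup
  have hclose := hl.closing
  have hlen : 3 ≤ l.length := hn.trans (by
    classical
    rw [← List.toFinset_card_of_nodup hnodup, (by ext; simp [hl.mem] : l.toFinset = univ),
      card_univ])
  rw [Nat.succ_sub_one, List.getElem?_eq_getElem (by omega)] at eA'
  rw [List.getElem?_eq_getElem hi] at eB
  generalize l[i] = x at *
  generalize l[i + 1] = y at *
  have hxA : x ∈ A := List.mem_of_getLast? eA'
  have hyB : y ∈ B := List.mem_of_head? eB
  have key : ∀ a b, (G ⊔ edge u v).Adj a b → ¬ (a = x ∧ b = y) → ¬ (a = y ∧ b = x) →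
      G.Adj a b := by
    simp only [sup_adj, edge_adj] at hxy ⊢
    grind
  rw [hAB, List.nodup_append] at hnodup
  rw [hAB, List.isChain_append] at hchain
  refine ⟨B ++ A, List.nodup_append_comm.1 (hAB ▸ hl.nodup), fun w => ?_, ?_⟩
  · have := hl.mem w
    rw [hAB] at this
    simpa [or_comm] using this
  · refine List.isChain_append.2 ⟨?_, ?_, fun a ha b hb => ?_⟩
    · exact hchain.2.1.imp_of_mem_imp fun a b ha hb hab => key a b hab (by grind) (by grind)
    · exact hchain.1.imp_of_mem_imp fun a b ha hb hab => key a b hab (by grind) (by grind)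
    · have haB : a ∈ B := List.mem_of_getLast? ha
      have hbA : b ∈ A := List.mem_of_head? hb
      refine key a b (hclose a (by grind) b (by grind)) (by grind) ?_
      rintro ⟨rfl, rfl⟩
      have hA₁ := hnodup.1.length_eq_one_of_head?_eq_getLast? hb eA'
      have hB₁ := hnodup.2.1.length_eq_one_of_head?_eq_getLast? eB ha
      rw [hAB, List.length_append] at hlen
      omega

/-- **McDiarmid–Yolov theorem**: a graph on at least three vertices with minimum degree at least
`s + t - 1` and no `(s, t)`-bipartite-hole has a Hamilton cycle. -/
theorem exists_isSpanningCycle [Fintype V] (G : SimpleGraph V) [DecidableRel G.Adj]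
    (hn : 3 ≤ Fintype.card V) {s t : ℕ} (hs : 0 < s) (ht : 0 < t) (hd : s + t - 1 ≤ G.minDegree)
    (hole : ¬ G.HasBipartiteHole s t) : ∃ l, G.IsSpanningCycle l := by
  classical
  by_contra! hno
  obtain ⟨H, hGH, hmax⟩ := Finite.exists_le_maximal
    (p := fun H : SimpleGraph V => ∀ l, ¬ H.IsSpanningCycle l) hno
  have hpath : ∃ l, H.IsSpanningPath l := by
    by_cases hH : ∀ u v, u ≠ v → H.Adj u v
    · exact ⟨univ.toList, univ.nodup_toList, by simp,
        (univ.nodup_toList.imp fun hab => hH _ _ hab).isChain⟩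
    · push Not at hH
      obtain ⟨u, v, huv, hadj⟩ := hH
      have hlt := H.lt_sup_edge u v huv hadj
      obtain ⟨l, hl⟩ : ∃ l, (H ⊔ edge u v).IsSpanningCycle l := by
        by_contra! hcon
        exact hlt.not_ge (hmax.2 hcon hlt.le)
      exact hl.exists_isSpanningPath_of_sup_edge hn
  obtain ⟨l, hl⟩ := hpath
  obtain ⟨l', hl'⟩ := hl.exists_isSpanningCycle hs ht
    (hd.trans (minDegree_le_minDegree hGH)) fun h => hole (h.anti hGH)
  exact hmax.1 l' hl'

theorem IsSpanningCycle.exists_isHamiltonianCycle [Fintype V] [DecidableEq V] {G : SimpleGraph V}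
    (hn : 3 ≤ Fintype.card V) {l : List V} (hl : G.IsSpanningCycle l) :
    ∃ a, ∃ p : G.Walk a a, p.IsHamiltonianCycle := by
  obtain ⟨v⟩ : Nonempty V := Fintype.card_pos_iff.1 (by omega)
  have hne : l ≠ [] := List.ne_nil_of_mem (hl.mem v)
  have hadj : G.Adj (l.getLast hne) (l.head hne) :=
    hl.closing _ (List.getLast_mem_getLast? hne) _ (List.head_mem_head? hne)
  have hham : (Walk.ofSupport l hne hl.chain).IsHamiltonian := fun a => by
    rw [Walk.support_ofSupport]
    exact List.count_eq_one_of_mem hl.nodup (hl.mem a)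
  refine ⟨_, .cons hadj (.ofSupport l hne hl.chain), ?_,
    fun a => by simpa [Walk.support_tail_of_not_nil] using hham a⟩
  rw [Walk.isCycle_iff_isPath_tail_and_le_length]
  refine ⟨by simpa using hham.isPath, ?_⟩
  have := hham.length_eq
  rw [Walk.length_cons]
  omega

/-- Every vertex has exactly two neighbours on a Hamilton cycle. -/
theorem Walk.IsHamiltonianCycle.card_filter_mem_edges [Fintype V] [DecidableEq V]
    {G : SimpleGraph V} {a : V} {p : G.Walk a a} (hp : p.IsHamiltonianCycle) (v : V) :
    #{w | s(v, w) ∈ p.edges} = 2 := by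
  rw [← hp.isCycle.ncard_neighborSet_toSubgraph_eq_two (hp.mem_support v),
    ← Set.ncard_coe_finset]
  congr 1
  ext w
  rw [Subgraph.mem_neighborSet, ← Subgraph.mem_edgeSet, Walk.mem_edges_toSubgraph]
  simp

/-- If `H` arises from `G` by deleting at most `d` edges at every vertex, then an
`(s, t + d * s)`-bipartite-hole of `H` contains an `(s, t)`-bipartite-hole of `G`. -/
theorem HasBipartiteHole.of_deleted_neighbors {G H : SimpleGraph V} [DecidableEq V] {s t d : ℕ}
    (D : V → Finset V) (hD : ∀ v, #(D v) ≤ d) (hGH : ∀ v w, G.Adj v w → ¬ H.Adj v w → w ∈ D v)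
    (h : H.HasBipartiteHole s (t + d * s)) : G.HasBipartiteHole s t := by
  obtain ⟨S, T, hST, hs, ht, hadj⟩ := h
  refine .of_le_card (S := S) (T := T \ S.biUnion D) (hST.mono_right sdiff_subset) hs.ge ?_ ?_
  · have h₁ : #(S.biUnion D) ≤ #S * d := card_biUnion_le_card_mul _ _ _ fun v _ => hD v
    have h₂ := le_card_sdiff (S.biUnion D) T
    rw [hs, mul_comm] at h₁
    omega
  · intro a ha b hb hab
    rw [mem_sdiff, mem_biUnion] at hb
    exact hb.2 ⟨a, ha, hGH a b hab (hadj a ha b hb.1)⟩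

/-- Fewer than `r + 1` Hamilton cycles can be supplemented by an edge-disjoint one. -/
theorem exists_isHamiltonianCycle_edge_disjoint [Fintype V] [DecidableEq V] (G : SimpleGraph V)
    [DecidableRel G.Adj] {r k : ℕ} (hn : 3 ≤ Fintype.card V)
    (h : (r + 1) * G.biHoleNumber + 3 * r ≤ G.minDegree) (hk : k ≤ r)
    (c : Fin k → Σ a : V, G.Walk a a) (hc : ∀ i, (c i).2.IsHamiltonianCycle) :
    ∃ a, ∃ p : G.Walk a a, p.IsHamiltonianCycle ∧ ∀ i, ∀ e ∈ p.edges, e ∉ (c i).2.edges := by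
  classical
  obtain ⟨s, t, hs, hst, hα, hole⟩ := G.exists_not_hasBipartiteHole
  set D : V → Finset V := fun v => univ.biUnion fun i => {w | s(v, w) ∈ (c i).2.edges} with hDdef
  have hD : ∀ v, #(D v) ≤ 2 * r := fun v => by
    refine (card_biUnion_le_card_mul _ _ 2 fun i _ => ((hc i).card_filter_mem_edges v).le).trans ?_
    rw [card_univ, Fintype.card_fin]
    omega
  set H := G.deleteEdges {e | ∃ i, e ∈ (c i).2.edges} with hH
  have hGH : ∀ v w, G.Adj v w → ¬ H.Adj v w → w ∈ D v := by
    intro v w hvw hnot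
    simpa [hH, hDdef, deleteEdges_adj, hvw] using hnot
  have : Nonempty V := Fintype.card_pos_iff.1 (by omega)
  have hdeg : G.minDegree - 2 * r ≤ H.minDegree := by
    refine H.le_minDegree_of_forall_le_degree _ fun v => ?_
    have h₁ : G.neighborFinset v \ D v ⊆ H.neighborFinset v := by
      intro w hw
      rw [mem_sdiff, mem_neighborFinset] at hw
      rw [mem_neighborFinset]
      by_contra hnot
      exact hw.2 (hGH v w hw.1 hnot)
    have h₂ := card_le_card h₁
    have h₃ := le_card_sdiff (D v) (G.neighborFinset v)
    have h₄ := G.minDegree_le_degree v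
    have h₅ := hD v
    rw [card_neighborFinset_eq_degree] at h₂ h₃
    omega
  have hbound : s + (t + 2 * r * s) - 1 ≤ H.minDegree := by
    refine le_trans ?_ hdeg
    have : r * (2 * s) ≤ r * (G.biHoleNumber + 1) := Nat.mul_le_mul_left r (by omega)
    have e : 2 * r * s = r * (2 * s) := by ring
    rw [add_mul, one_mul] at h
    rw [mul_add, mul_one] at this
    omega
  obtain ⟨l, hl⟩ := H.exists_isSpanningCycle hn hs (by omega) hbound
    fun hH => hole (hH.of_deleted_neighbors D hD hGH)
  obtain ⟨a, p, hp⟩ := hl.exists_isHamiltonianCycle hn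
  have hle : H ≤ G := deleteEdges_le _
  refine ⟨a, p.mapLe hle, hp.map (f := .ofLE hle) Function.bijective_id, fun i e he hei => ?_⟩
  rw [Walk.edges_mapLe_eq_edges] at he
  have := p.edges_subset_edgeSet he
  rw [hH, edgeSet_deleteEdges] at this
  exact this.2 ⟨i, hei⟩

end SimpleGraph

theorem edge_disjoint_hamilton_cycles_of_minDegree
    {V : Type*} [Fintype V] [DecidableEq V] (G : SimpleGraph V) [DecidableRel G.Adj]
    (r : ℕ) (hn : 3 ≤ Fintype.card V)
    (h : (r + 1) * G.biHoleNumber + 3 * r ≤ G.minDegree) :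
    ∃ c : Fin (r + 1) → Σ a : V, G.Walk a a,
      (∀ i, (c i).2.IsHamiltonianCycle) ∧
      ∀ i j, i ≠ j → ∀ e ∈ (c i).2.edges, e ∉ (c j).2.edges := by
  suffices H : ∀ k ≤ r + 1, ∃ c : Fin k → Σ a : V, G.Walk a a,
      (∀ i, (c i).2.IsHamiltonianCycle) ∧
      ∀ i j, i ≠ j → ∀ e ∈ (c i).2.edges, e ∉ (c j).2.edges from H _ le_rfl
  intro k
  induction k with
  | zero => exact fun _ => ⟨fun i => i.elim0, fun i => i.elim0, fun i => i.elim0⟩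
  | succ k ih =>
    intro hk
    obtain ⟨c, hc, hdisj⟩ := ih (by omega)
    obtain ⟨a, p, hp, hpc⟩ :=
      G.exists_isHamiltonianCycle_edge_disjoint hn h (by omega : k ≤ r) c hc
    refine ⟨Fin.cons ⟨a, p⟩ c, Fin.cases hp hc, Fin.cases (Fin.cases ?_ ?_) fun i =>
      Fin.cases ?_ ?_⟩
    · exact fun hne => (hne rfl).elim
    · exact fun j _ => hpc j
    · exact fun _ e he hep => hpc i e hep he
    · exact fun j hij => hdisj i j fun h => hij (congrArg Fin.succ h)
end

section
/- Let G be a finite simple graph, let u and v be distinct vertices of G, and let S be a set of vertices with u ∉ S, v ∉ S, and |S| < δ(G) + 2 − α̃(G). Then there is a path in G from u to v avoiding all vertices of S. (Equivalently, the vertex connectivity of G satisfies κ(G) ≥ δ(G) + 2 − α̃(G).) -/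
namespace SimpleGraph

variable {V : Type*} (G : SimpleGraph V)

variable {G}

lemma HasBipartiteHole.of_finset {A B : Finset V} {s t : ℕ} (hAB : Disjoint A B)
    (hs : s ≤ A.card) (ht : t ≤ B.card) (h : ∀ a ∈ A, ∀ b ∈ B, ¬ G.Adj a b) :
    G.HasBipartiteHole s t := by
  obtain ⟨A', hA', rfl⟩ := Finset.exists_subset_card_eq hs
  obtain ⟨B', hB', rfl⟩ := Finset.exists_subset_card_eq ht
  exact ⟨A', B', hAB.mono hA' hB', rfl, rfl, fun a ha b hb => h a (hA' ha) b (hB' hb)⟩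

variable (G) in
/-- `b` can be reached from `a` by a walk avoiding `S`. -/
def ReachableAvoiding (S : Finset V) (a b : V) : Prop :=
  ∃ p : G.Walk a b, ∀ w ∈ p.support, w ∉ S

namespace ReachableAvoiding

variable {S : Finset V} {a b c : V}

lemma refl (ha : a ∉ S) : G.ReachableAvoiding S a a :=
  ⟨.nil, by simpa using ha⟩

lemma symm (h : G.ReachableAvoiding S a b) : G.ReachableAvoiding S b a := by
  obtain ⟨p, hp⟩ := h
  exact ⟨p.reverse, by simpa using hp⟩

lemma trans (h : G.ReachableAvoiding S a b) (h' : G.ReachableAvoiding S b c) :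
    G.ReachableAvoiding S a c := by
  obtain ⟨p, hp⟩ := h
  obtain ⟨q, hq⟩ := h'
  refine ⟨p.append q, fun w hw => ?_⟩
  rw [Walk.mem_support_append_iff] at hw
  exact hw.elim (hp w) (hq w)

lemma of_adj (ha : a ∉ S) (hb : b ∉ S) (h : G.Adj a b) : G.ReachableAvoiding S a b :=
  ⟨h.toWalk, by simp [ha, hb]⟩

lemma notMem_right (h : G.ReachableAvoiding S a b) : b ∉ S := by
  obtain ⟨p, hp⟩ := h
  exact hp b p.end_mem_support

lemma exists_isPath [DecidableEq V] (h : G.ReachableAvoiding S a b) :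
    ∃ p : G.Walk a b, p.IsPath ∧ ∀ w ∈ p.support, w ∉ S := by
  obtain ⟨p, hp⟩ := h
  exact ⟨p.bypass, p.bypass_isPath, fun w hw => hp w (p.support_bypass_subset_support hw)⟩

end ReachableAvoiding

open scoped Classical in
/-- A component of the graph outside `S` together with `S` contains a closed neighbourhood. -/
lemma minDegree_lt_card_reachableAvoiding_add_card [Fintype V] [DecidableRel G.Adj]
    {S : Finset V} {a : V} (ha : a ∉ S) :
    G.minDegree < (Finset.univ.filter (G.ReachableAvoiding S a)).card + S.card := by
  have hsub : insert a (G.neighborFinset a) ⊆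
      Finset.univ.filter (G.ReachableAvoiding S a) ∪ S := by
    intro w hw
    by_cases hwS : w ∈ S
    · exact Finset.mem_union_right _ hwS
    · refine Finset.mem_union_left _ (Finset.mem_filter.2 ⟨Finset.mem_univ _, ?_⟩)
      rcases Finset.mem_insert.1 hw with rfl | hw
      · exact .refl ha
      · exact .of_adj ha hwS ((G.mem_neighborFinset a w).1 hw)
  have hcard := (Finset.card_le_card hsub).trans (Finset.card_union_le _ _)
  rw [Finset.card_insert_of_notMem (by simp), card_neighborFinset_eq_degree] at hcard
  have := G.minDegree_le_degree a
  omega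

end SimpleGraph

theorem connectivity_ge_minDegree_add_two_sub_biHoleNumber
    {V : Type*} [Fintype V] [DecidableEq V] (G : SimpleGraph V) [DecidableRel G.Adj]
    (u v : V) (huv : u ≠ v) (S : Finset V) (hu : u ∉ S) (hv : v ∉ S)
    (hS : (S.card : ℤ) < (G.minDegree : ℤ) + 2 - (G.biHoleNumber : ℤ)) :
    ∃ p : G.Walk u v, p.IsPath ∧ ∀ w ∈ p.support, w ∉ S := by
  classical
  suffices h : G.ReachableAvoiding S u v from h.exists_isPath
  by_contra h
  obtain ⟨s, t, hs, ht, hr, hole⟩ := G.exists_not_hasBipartiteHole_of_biHoleNumber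
  have hA := SimpleGraph.minDegree_lt_card_reachableAvoiding_add_card (G := G) hu
  have hB := SimpleGraph.minDegree_lt_card_reachableAvoiding_add_card (G := G) hv
  refine hole (.of_finset (A := Finset.univ.filter (G.ReachableAvoiding S u))
    (B := Finset.univ.filter (G.ReachableAvoiding S v)) ?_ (by omega) (by omega) ?_)
  · refine Finset.disjoint_left.2 fun w hw hw' => h ?_
    exact (Finset.mem_filter.1 hw).2.trans (Finset.mem_filter.1 hw').2.symm
  · intro a ha b hb hab
    have ha := (Finset.mem_filter.1 ha).2
    have hb := (Finset.mem_filter.1 hb).2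
    exact h ((ha.trans (.of_adj ha.notMem_right hb.notMem_right hab)).trans hb.symm)
end

section
/- Let v₁, v₂, …, v_n (n ≥ 3) be a path in a simple graph G, i.e. the vertices are pairwise distinct and v_i is adjacent to v_{i+1} for 1 ≤ i < n. If for some index j with 1 < j < n the vertex v_j is adjacent to v₁ and the vertex v_{j−1} is adjacent to v_n, then G contains a cycle whose vertex set is exactly {v₁, …, v_n}; in particular the induced subgraph of G on {v₁, …, v_n} is Hamiltonian. -/
/-- A closed sequence of `m + 1 ≥ 3` distinct, cyclically adjacent vertices is the vertex
sequence of a cycle. -/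
theorem SimpleGraph.exists_isCycle_of_cyclic_sequence {V : Type*} (G : SimpleGraph V) (w : ℕ → V)
    (m : ℕ) (hm : 2 ≤ m) (hinj : Set.InjOn w (Set.Iic m))
    (hadj : ∀ i < m, G.Adj (w i) (w (i + 1))) (hclose : G.Adj (w m) (w 0)) :
    ∃ (a : V) (c : G.Walk a a), c.IsCycle ∧ ∀ x, x ∈ c.support ↔ ∃ i ≤ m, w i = x := by
  have hne : (List.range (m + 1)).map w ≠ [] := by simp
  have hchain : ((List.range (m + 1)).map w).IsChain G.Adj := by
    rw [List.isChain_iff_getElem]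
    intro i hi
    simpa using hadj i (by simpa using hi)
  have hhead : ((List.range (m + 1)).map w).head hne = w 0 := by simp [List.head_eq_getElem]
  have hlast : ((List.range (m + 1)).map w).getLast hne = w m := by
    simp [List.getLast_eq_getElem]
  let p : G.Walk (w 0) (w m) := (Walk.ofSupport _ hne hchain).copy hhead hlast
  have hsupp : p.support = (List.range (m + 1)).map w := by simp [p]
  have hlen : p.length = m := by simp [p]
  have hp : p.IsPath := by
    rw [Walk.isPath_def, hsupp]
    refine List.Nodup.map_on (fun i hi k hk h => hinj ?_ ?_ h) List.nodup_range
    all_goals simp only [List.mem_range] at hi hk; simp only [Set.mem_Iic]; omega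
  refine ⟨w m, Walk.cons hclose p,
    Walk.isCycle_iff_isPath_tail_and_le_length.mpr ⟨by simpa using hp, ?_⟩, fun x => ?_⟩
  · rw [Walk.length_cons]; omega
  · rw [Walk.support_cons, hsupp]
    simp only [List.mem_cons, List.mem_map, List.mem_range, Nat.lt_succ_iff, or_iff_right_iff_imp]
    rintro rfl
    exact ⟨m, le_rfl, rfl⟩

/-- Situation (a): a single flip closes a maximal path into a spanning cycle.
Vertices `v 0, v 1, …, v (n-1)` (1-based `v₁, …, v_n` in the paper) form a path;
index `j` here corresponds to the paper's `j ∈ (1, n)` shifted down by one. -/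
theorem cycle_of_single_flip {V : Type*} (G : SimpleGraph V) (n : ℕ) (hn : 3 ≤ n)
    (v : ℕ → V)
    (hinj : ∀ i j, i < n → j < n → v i = v j → i = j)
    (hpath : ∀ i, i + 1 < n → G.Adj (v i) (v (i + 1)))
    (j : ℕ) (hj0 : 0 < j) (hjn : j < n - 1)
    (h1 : G.Adj (v j) (v 0))
    (h2 : G.Adj (v (j - 1)) (v (n - 1))) :
    ∃ (a : V) (c : G.Walk a a), c.IsCycle ∧
      (∀ x, x ∈ c.support ↔ ∃ i < n, v i = x) := by
  -- The cycle is `v 0, …, v (j - 1), v (n - 1), v (n - 2), …, v j`.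
  let σ : ℕ → ℕ := fun i => if i < j then i else n - 1 + j - i
  have hσ_lt : ∀ i ≤ n - 1, σ i < n := by grind
  have hσ_invol : ∀ i ≤ n - 1, σ (σ i) = i := by grind
  obtain ⟨a, c, hc, hsupp⟩ := G.exists_isCycle_of_cyclic_sequence (v ∘ σ) (n - 1) (by omega)
    (fun i hi k hk h => by
      rw [← hσ_invol i hi, hinj _ _ (hσ_lt i hi) (hσ_lt k hk) h, hσ_invol k hk])
    (fun i hi => by
      rcases lt_trichotomy (i + 1) j with h | h | h
      · have e₁ : σ i = i := by grind
        have e₂ : σ (i + 1) = i + 1 := by grind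
        simpa [e₁, e₂] using hpath i (by omega)
      · have e₁ : σ i = j - 1 := by grind
        have e₂ : σ (i + 1) = n - 1 := by grind
        simpa [e₁, e₂] using h2
      · have e : σ i = σ (i + 1) + 1 := by grind
        simpa [e] using (hpath (σ (i + 1)) (e ▸ hσ_lt i hi.le)).symm)
    (by
      have e₁ : σ (n - 1) = j := by grind
      have e₂ : σ 0 = 0 := by grind
      simpa [e₁, e₂] using h1)
  refine ⟨a, c, hc, fun x => (hsupp x).trans ⟨?_, ?_⟩⟩
  · rintro ⟨i, hi, rfl⟩
    exact ⟨σ i, hσ_lt i hi, rfl⟩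
  · rintro ⟨i, hi, rfl⟩
    have hi' : i ≤ n - 1 := by omega
    exact ⟨σ i, Nat.le_sub_one_of_lt (hσ_lt i hi'), congrArg v (hσ_invol i hi')⟩
end

section
/- Let v₁, v₂, …, v_n (n ≥ 3) be a path in a simple graph G, i.e. the vertices are pairwise distinct and v_i is adjacent to v_{i+1} for 1 ≤ i < n. Suppose there exist indices i and j with 2 ≤ i ≤ j ≤ n − 1 such that v_i is adjacent to v₁, v_j is adjacent to v_n, and v_{i−1} is adjacent to v_{j+1}. Then G contains a cycle whose vertex set is exactly {v₁, …, v_n}; in particular the induced subgraph of G on {v₁, …, v_n} is Hamiltonian. -/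
/-- A sequence of successively adjacent vertices is the support of a walk. -/
theorem SimpleGraph.exists_walk_support_eq_map_range {V : Type*} {G : SimpleGraph V}
    (w : ℕ → V) (m : ℕ) (hadj : ∀ k < m, G.Adj (w k) (w (k + 1))) :
    ∃ p : G.Walk (w 0) (w m), p.support = (List.range (m + 1)).map w := by
  induction m with
  | zero => exact ⟨.nil, by simp⟩
  | succ m ih =>
    obtain ⟨p, hp⟩ := ih fun k hk => hadj k (by lia)
    refine ⟨p.concat (hadj m (by lia)), ?_⟩
    rw [SimpleGraph.Walk.support_concat, hp, List.range_succ (n := m + 1)]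
    simp

/-- Distinct, cyclically adjacent vertices `w 0, …, w m` with `2 ≤ m` are the vertices of
a cycle. -/
theorem SimpleGraph.exists_isCycle_of_injOn {V : Type*} {G : SimpleGraph V}
    (w : ℕ → V) {m : ℕ} (hm : 2 ≤ m) (hinj : Set.InjOn w (Set.Iic m))
    (hadj : ∀ k < m, G.Adj (w k) (w (k + 1))) (hclose : G.Adj (w m) (w 0)) :
    ∃ c : G.Walk (w m) (w m), c.IsCycle ∧ ∀ x, x ∈ c.support ↔ ∃ k ≤ m, w k = x := by
  obtain ⟨p, hp⟩ := SimpleGraph.exists_walk_support_eq_map_range w m hadj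
  have hpath : p.IsPath := by
    rw [SimpleGraph.Walk.isPath_def, hp]
    refine List.Nodup.map_on (fun a ha b hb hab => hinj ?_ ?_ hab) List.nodup_range
    · simpa [Nat.lt_succ_iff] using ha
    · simpa [Nat.lt_succ_iff] using hb
  have hlen : p.length = m := by
    have := p.length_support
    rw [hp] at this
    simpa using this.symm
  refine ⟨.cons hclose p, (SimpleGraph.Walk.cons_isCycle_iff p hclose).2 ⟨hpath, fun he => ?_⟩,
    fun x => ?_⟩
  · rw [Sym2.eq_swap] at he
    have := hpath.length_eq_one_of_mem_edges he
    lia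
  · rw [SimpleGraph.Walk.support_cons, List.mem_cons,
      or_iff_right_of_imp (fun h => h ▸ p.end_mem_support), hp]
    simp

/-- Situation (b): a double nested flip closes a maximal path into a spanning cycle.
Vertices `v 0, v 1, …, v (n-1)` (1-based `v₁, …, v_n` in the paper) form a path;
indices `i, j` here correspond to the paper's `2 ≤ i ≤ j ≤ n - 1` shifted down by one,
so `1 ≤ i ≤ j ≤ n - 2`. -/
theorem cycle_of_double_nested_flip {V : Type*} (G : SimpleGraph V) (n : ℕ) (hn : 3 ≤ n)
    (v : ℕ → V)
    (hinj : ∀ i j, i < n → j < n → v i = v j → i = j)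
    (hpath : ∀ i, i + 1 < n → G.Adj (v i) (v (i + 1)))
    (i j : ℕ) (hi : 1 ≤ i) (hij : i ≤ j) (hj : j ≤ n - 2)
    (h1 : G.Adj (v i) (v 0))
    (h2 : G.Adj (v j) (v (n - 1)))
    (h3 : G.Adj (v (i - 1)) (v (j + 1))) :
    ∃ (a : V) (c : G.Walk a a), c.IsCycle ∧
      (∀ x, x ∈ c.support ↔ ∃ k < n, v k = x) := by
  -- Visit `v 0, …, v (i - 1)`, then `v (j + 1), …, v (n - 1)`, then `v j, …, v i`.
  let σ : ℕ → ℕ := fun k =>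
    if k < i then k else if k < i + (n - 1 - j) then k - i + j + 1 else i + (n - 1) - k
  have hσ_lt : ∀ k ≤ n - 1, σ k < n := by grind
  have hinjOn : Set.InjOn (fun k => v (σ k)) (Set.Iic (n - 1)) := by
    intro a ha b hb hab
    have ha' : a ≤ n - 1 := ha
    have hb' : b ≤ n - 1 := hb
    have := hinj _ _ (hσ_lt a ha') (hσ_lt b hb') hab
    grind
  have hadj : ∀ k < n - 1, G.Adj (v (σ k)) (v (σ (k + 1))) := by
    intro k hk
    have hcases : σ (k + 1) = σ k + 1 ∨ σ k = σ (k + 1) + 1 ∨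
        (σ k = i - 1 ∧ σ (k + 1) = j + 1) ∨ (σ k = n - 1 ∧ σ (k + 1) = j) := by grind
    have hk₁ := hσ_lt k hk.le
    have hk₂ := hσ_lt (k + 1) hk
    rcases hcases with h | h | ⟨h, h'⟩ | ⟨h, h'⟩
    · rw [h] at hk₂ ⊢
      exact hpath _ hk₂
    · rw [h] at hk₁ ⊢
      exact (hpath _ hk₁).symm
    · rw [h, h']
      exact h3
    · rw [h, h']
      exact h2.symm
  have hclose : G.Adj (v (σ (n - 1))) (v (σ 0)) := by
    have hlast : σ (n - 1) = i := by grind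
    have hzero : σ 0 = 0 := by grind
    simpa only [hlast, hzero] using h1
  obtain ⟨c, hc, hsupp⟩ := SimpleGraph.exists_isCycle_of_injOn (fun k => v (σ k)) (by lia)
    hinjOn hadj hclose
  refine ⟨_, c, hc, fun x => (hsupp x).trans ⟨?_, ?_⟩⟩
  · rintro ⟨k, hk, rfl⟩
    exact ⟨σ k, hσ_lt k hk, rfl⟩
  · rintro ⟨k, hk, rfl⟩
    have hsurj : ∃ l ≤ n - 1, σ l = k := by
      rcases lt_or_ge k i with hki | hki
      · exact ⟨k, by lia, by grind⟩
      rcases le_or_gt k j with hkj | hkj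
      · exact ⟨i + (n - 1) - k, by lia, by grind⟩
      · exact ⟨k + i - j - 1, by lia, by grind⟩
    obtain ⟨l, hl, rfl⟩ := hsurj
    exact ⟨l, hl, rfl⟩
end

section
/- Let v₁, v₂, …, v_n (n ≥ 3) be a path in a simple graph G, i.e. the vertices are pairwise distinct and v_i is adjacent to v_{i+1} for 1 ≤ i < n. Suppose there exist indices i and j with 1 ≤ j < i ≤ n − 1 such that v_i is adjacent to v₁, v_j is adjacent to v_n, and v_{i+1} is adjacent to v_{j+1}. Then G contains a cycle whose vertex set is exactly {v₁, …, v_n}; in particular the induced subgraph of G on {v₁, …, v_n} is Hamiltonian. -/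
namespace SimpleGraph

variable {V : Type*} {G : SimpleGraph V}

/-- A sequence of consecutively adjacent vertices is the support of a walk. -/
theorem exists_walk_support_eq_map_range_s7 {w : ℕ → V} {m : ℕ}
    (hadj : ∀ k < m, G.Adj (w k) (w (k + 1))) :
    ∃ p : G.Walk (w 0) (w m), p.support = (List.range (m + 1)).map w := by
  induction m with
  | zero => exact ⟨.nil, by simp⟩
  | succ m ih =>
    obtain ⟨p, hp⟩ := ih fun k hk ↦ hadj k (by omega)
    refine ⟨p.concat (hadj m (by omega)), ?_⟩
    rw [Walk.support_concat, hp, List.range_succ (n := m + 1)]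
    simp

/-- A sequence of at least three distinct vertices, consecutively adjacent and with adjacent
endpoints, is the vertex set of a cycle. -/
theorem exists_isCycle_of_injOn_s7 {w : ℕ → V} {n : ℕ} (hn : 3 ≤ n)
    (hinj : Set.InjOn w (Set.Iio n)) (hadj : ∀ k, k + 1 < n → G.Adj (w k) (w (k + 1)))
    (hclose : G.Adj (w (n - 1)) (w 0)) :
    ∃ (a : V) (c : G.Walk a a), c.IsCycle ∧ ∀ x, x ∈ c.support ↔ ∃ k < n, w k = x := by
  obtain ⟨m, rfl⟩ : ∃ m, n = m + 1 := ⟨n - 1, by omega⟩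
  obtain ⟨p, hp⟩ := exists_walk_support_eq_map_range_s7 (G := G) (w := w) (m := m)
    fun k hk ↦ hadj k (by omega)
  have hlen : p.length = m := by simpa using congrArg List.length hp
  have hpath : p.IsPath := by
    rw [Walk.isPath_def, hp]
    exact List.nodup_range.map_on fun a ha b hb hab ↦
      hinj (by simpa using ha) (by simpa using hb) hab
  refine ⟨w m, .cons hclose p, (p.cons_isCycle_iff _).mpr ⟨hpath, fun hmem ↦ ?_⟩, fun x ↦ ?_⟩
  · have := hpath.length_eq_one_of_mem_edges (Sym2.eq_swap ▸ hmem)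
    omega
  · have hx : x ∈ p.support ↔ ∃ k < m + 1, w k = x := by simp [hp]
    rw [Walk.support_cons, List.mem_cons, ← hx]
    exact or_iff_right_of_imp fun h ↦ h ▸ p.end_mem_support

end SimpleGraph

/-- Situation (c): a double cross flip closes a maximal path into a spanning cycle.
Vertices `v 0, v 1, …, v (n-1)` (1-based `v₁, …, v_n` in the paper) form a path;
indices `i, j` here correspond to the paper's `1 ≤ j < i ≤ n - 1` shifted down by one,
so `0 ≤ j < i ≤ n - 2`. -/
theorem cycle_of_double_cross_flip {V : Type*} (G : SimpleGraph V) (n : ℕ) (hn : 3 ≤ n)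
    (v : ℕ → V)
    (hinj : ∀ i j, i < n → j < n → v i = v j → i = j)
    (hpath : ∀ i, i + 1 < n → G.Adj (v i) (v (i + 1)))
    (i j : ℕ) (hji : j < i) (hi : i ≤ n - 2)
    (h1 : G.Adj (v i) (v 0))
    (h2 : G.Adj (v j) (v (n - 1)))
    (h3 : G.Adj (v (i + 1)) (v (j + 1))) :
    ∃ (a : V) (c : G.Walk a a), c.IsCycle ∧
      (∀ x, x ∈ c.support ↔ ∃ k < n, v k = x) := by
  -- The cycle is `v 0, …, v j, v (n - 1), …, v (i + 1), v (j + 1), …, v i`.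
  let σ : ℕ → ℕ := fun k ↦
    if k ≤ j then k else if k + i < n + j then n + j - k else k + i + 1 - n
  have hσ_lt : ∀ k < n, σ k < n := by grind
  have hσ_inj : ∀ k < n, ∀ l < n, σ k = σ l → k = l := by grind
  have hσ_surj : ∀ m < n, ∃ k < n, σ k = m := by
    intro m hm
    refine ⟨if m ≤ j then m else if i < m then n + j - m else m + n - i - 1, ?_, ?_⟩ <;> grind
  have hadj : ∀ k, k + 1 < n → G.Adj (v (σ k)) (v (σ (k + 1))) := by
    intro k hk
    have hσ : σ (k + 1) = σ k + 1 ∧ σ k + 1 < n ∨ σ k = σ (k + 1) + 1 ∧ σ (k + 1) + 1 < n ∨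
        σ k = j ∧ σ (k + 1) = n - 1 ∨ σ k = i + 1 ∧ σ (k + 1) = j + 1 := by
      clear hσ_lt hσ_inj hσ_surj hinj hpath
      grind
    rcases hσ with ⟨h, hlt⟩ | ⟨h, hlt⟩ | ⟨h, h'⟩ | ⟨h, h'⟩
    · exact h ▸ hpath _ hlt
    · exact h ▸ (hpath _ hlt).symm
    · rwa [h, h']
    · rwa [h, h']
  have hclose : G.Adj (v (σ (n - 1))) (v (σ 0)) := by
    have hlast : σ (n - 1) = i := by grind
    have hfirst : σ 0 = 0 := by grind
    rwa [hlast, hfirst]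
  obtain ⟨a, c, hc, hsupp⟩ := SimpleGraph.exists_isCycle_of_injOn_s7 (w := v ∘ σ) hn
    (fun k hk l hl h ↦ hσ_inj k hk l hl (hinj _ _ (hσ_lt k hk) (hσ_lt l hl) h)) hadj hclose
  refine ⟨a, c, hc, fun x ↦ (hsupp x).trans ⟨?_, ?_⟩⟩
  · rintro ⟨k, hk, rfl⟩
    exact ⟨σ k, hσ_lt k hk, rfl⟩
  · rintro ⟨m, hm, rfl⟩
    obtain ⟨k, hk, rfl⟩ := hσ_surj m hm
    exact ⟨k, hk, rfl⟩
end

section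
/- Fix 0 < ε < 1, let p : ℕ → ℝ satisfy 0 ≤ p(n) ≤ 1 − ε for all n, and let r : ℕ → ℕ satisfy r(n) ≥ 1 for all n. For n ≥ 1 let q(n) denote the Erdős–Rényi probability that a graph drawn from G(n, p(n)) does NOT contain r(n) pairwise edge-disjoint Hamilton cycles. Then: (i) q(n) ≥ (1 − p(n))^n for every n ≥ 1, and (ii) for every real c > 2 there exists N such that for all n ≥ N, q(n) ≤ (1 − p(n))^n · exp(c · r(n) · √n · log n). (Equivalently, n·log(1−p) ≤ log q(n) ≤ n·log(1−p) + (2 + o(1))·r·√n·log n.) -/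
open Classical in
/-- The Erdős–Rényi probability that a graph drawn from `G(n, p)` satisfies property `A`:
the sum over all simple graphs `G` on vertex set `Fin n` satisfying `A` of
`p ^ e(G) * (1 - p) ^ (C(n,2) - e(G))`. -/
noncomputable def erProb (n : ℕ) (p : ℝ) (A : SimpleGraph (Fin n) → Prop) : ℝ :=
  ∑ G : SimpleGraph (Fin n),
    if A G then p ^ G.edgeSet.ncard * (1 - p) ^ (n.choose 2 - G.edgeSet.ncard) else 0

/-- `G` contains `r` pairwise edge-disjoint Hamilton cycles. -/
def SimpleGraph.HasEdgeDisjointHamCycles {V : Type*} [DecidableEq V]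
    (G : SimpleGraph V) (r : ℕ) : Prop :=
  ∃ c : Fin r → Σ a : V, G.Walk a a,
    (∀ i, (c i).2.IsHamiltonianCycle) ∧
    ∀ i j, i ≠ j → ∀ e ∈ (c i).2.edges, e ∉ (c j).2.edges

namespace SimpleGraph

variable {V : Type*} {G : SimpleGraph V}

/-- A list of distinct vertices, consecutive ones adjacent, whose last vertex is adjacent to the
first. Lists of length two (edges) are allowed. -/
structure IsCyclicList (G : SimpleGraph V) (l : List V) : Prop where
  nodup : l.Nodup
  isChain : l.IsChain G.Adj
  closing : ∀ x ∈ l.getLast?, ∀ y ∈ l.head?, G.Adj x y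

namespace IsCyclicList

theorem append_comm {a b : List V} (h : G.IsCyclicList (a ++ b)) : G.IsCyclicList (b ++ a) := by
  obtain ⟨h1, h2, h3⟩ := h
  rw [List.isChain_append] at h2
  refine ⟨List.nodup_append_comm.1 h1, ?_, ?_⟩
  · rw [List.isChain_append]
    refine ⟨h2.2.1, h2.1, fun x hx y hy => h3 x ?_ y ?_⟩
    · rw [List.getLast?_append, Option.mem_def.1 hx]; simp
    · rw [List.head?_append, Option.mem_def.1 hy]; simp
  · rcases eq_or_ne a [] with rfl | ha
    · simpa using h3
    rcases eq_or_ne b [] with rfl | hb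
    · simpa using h3
    intro x hx y hy
    refine h2.2.2 x ?_ y ?_
    · rwa [List.getLast?_append_of_ne_nil _ ha] at hx
    · rwa [List.head?_append_of_ne_nil _ hb] at hy

theorem append {l P : List V} (h : G.IsCyclicList l) {x z u w : V}
    (hx : l.getLast? = some x) (hz : l.head? = some z) (hP : P.Nodup) (hPc : P.IsChain G.Adj)
    (hu : P.head? = some u) (hw : P.getLast? = some w) (hd : ∀ v ∈ P, v ∉ l)
    (hxu : G.Adj x u) (hwz : G.Adj w z) : G.IsCyclicList (l ++ P) := by
  refine ⟨?_, ?_, ?_⟩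
  · rw [List.nodup_append]
    exact ⟨h.nodup, hP, fun a ha b hb hab => hd b hb (hab ▸ ha)⟩
  · rw [List.isChain_append]
    refine ⟨h.isChain, hPc, ?_⟩
    simp [hx, hu, hxu]
  · simp [List.getLast?_append, List.head?_append, hw, hz, hwz]

/-- The crossing step: if `l₁ = z … y` and `l₂ = y' … x`, then `z ~ y'` allows to rebuild the cycle
so that it passes through the path `P`, whose ends are adjacent to `x` and `y`. -/
theorem cross {l₁ l₂ P : List V} (h : G.IsCyclicList (l₁ ++ l₂)) {x y z y' u w : V}
    (hz : l₁.head? = some z) (hy : l₁.getLast? = some y)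
    (hy' : l₂.head? = some y') (hx : l₂.getLast? = some x) (hP : P.Nodup) (hPc : P.IsChain G.Adj)
    (hu : P.head? = some u) (hw : P.getLast? = some w) (hd : ∀ v ∈ P, v ∉ l₁ ++ l₂)
    (hxu : G.Adj x u) (hwy : G.Adj w y) (hzy : G.Adj z y') :
    G.IsCyclicList (l₁.reverse ++ l₂ ++ P) := by
  obtain ⟨h1, h2, h3⟩ := h
  rw [List.isChain_append] at h2
  refine ⟨?_, ?_, ?_⟩
  · rw [List.nodup_append]
    refine ⟨?_, hP, fun a ha b hb hab => hd b hb ?_⟩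
    · rw [List.nodup_append] at h1 ⊢
      simpa using h1
    · subst hab; simpa using ha
  · rw [List.isChain_append, List.isChain_append]
    refine ⟨⟨?_, h2.2.1, ?_⟩, hPc, ?_⟩
    · rw [List.isChain_reverse]
      simpa [G.adj_comm] using h2.1
    · simp [hz, hy', hzy]
    · simp [List.getLast?_append, hx, hu, hxu]
  · simp [List.getLast?_append, List.head?_append, hw, hy, hwy]

theorem exists_eq_append_cons_cons_of_ne_getLast {l : List V} {x y : V}
    (hx : l.getLast? = some x) (hy : y ∈ l) (hxy : y ≠ x) :
    ∃ s y' t, l = s ++ y :: y' :: t := by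
  obtain ⟨s, t, rfl⟩ := List.append_of_mem hy
  rcases t with _ | ⟨y', t⟩
  · simp [List.getLast?_append] at hx
    exact absurd hx hxy
  · exact ⟨s, y', t, rfl⟩

variable [DecidableEq V]

theorem exists_rotation {l : List V} (h : G.IsCyclicList l) {x : V} (hx : x ∈ l) :
    ∃ l', G.IsCyclicList l' ∧ l ~r l' ∧ l'.getLast? = some x ∧
      l'.head? = some (l.formPerm x) := by
  obtain ⟨s, t, rfl⟩ := List.append_of_mem hx
  have hrot : (s ++ x :: t) ~r (t ++ (s ++ [x])) := by
    have : s ++ x :: t = (s ++ [x]) ++ t := by simp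
    rw [this]
    exact List.isRotated_append
  have hc : G.IsCyclicList (t ++ (s ++ [x])) := by
    apply append_comm
    simpa using h
  refine ⟨_, hc, hrot, by simp [List.getLast?_append], ?_⟩
  rw [List.formPerm_eq_of_isRotated h.nodup hrot]
  rcases hts : t ++ s with _ | ⟨z, m⟩
  · obtain ⟨rfl, rfl⟩ := List.append_eq_nil_iff.1 hts
    simp
  · rw [← List.append_assoc, hts]
    simp

theorem formPerm_apply_middle {s t : List V} {y y' : V} (h : (s ++ y :: y' :: t).Nodup) :
    (s ++ y :: y' :: t).formPerm y = y' := by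
  have hrot : (s ++ y :: y' :: t) ~r ((y :: y' :: t) ++ s) := List.isRotated_append
  rw [List.formPerm_eq_of_isRotated h hrot]
  have := hrot.nodup_iff.1 h
  exact List.formPerm_apply_head _ _ _ this

/-- In a longest cyclic list, the successors of the vertices attached to a connected set `H`
outside the list are neither attached to `H` nor adjacent to each other. -/
theorem not_adj_of_maximal {l : List V} (h : G.IsCyclicList l)
    (hmax : ∀ l', G.IsCyclicList l' → l'.length ≤ l.length) (H : Set V)
    (hH : ∀ u ∈ H, ∀ w ∈ H, ∃ P : List V, P.Nodup ∧ P.IsChain G.Adj ∧ P.head? = some u ∧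
      P.getLast? = some w ∧ ∀ v ∈ P, v ∉ l)
    {x y u w : V} (hx : x ∈ l) (hy : y ∈ l) (hu : u ∈ H) (hxu : G.Adj x u) (hw : w ∈ H)
    (hyw : G.Adj y w) :
    y ≠ l.formPerm x ∧ ¬ G.Adj (l.formPerm x) (l.formPerm y) := by
  obtain ⟨l', hc, hrot, hlast, hhead⟩ := h.exists_rotation hx
  obtain ⟨P, hP, hPc, hPu, hPw, hPd⟩ := hH u hu w hw
  have hPpos : 0 < P.length := by
    rcases P with _ | _ <;> simp_all
  have hPd' : ∀ v ∈ P, v ∉ l' := fun v hv hv' => hPd v hv (hrot.mem_iff.2 hv')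
  have hlen : l'.length = l.length := hrot.perm.length_eq.symm
  refine ⟨?_, ?_⟩
  · rintro rfl
    have := hmax _ (hc.append hlast hhead hP hPc hPu hPw hPd' hxu hyw.symm)
    rw [List.length_append] at this
    omega
  · intro hadj
    have hyx : y ≠ x := by
      rintro rfl
      exact G.loopless.irrefl _ hadj
    obtain ⟨s, y', t, rfl⟩ := exists_eq_append_cons_cons_of_ne_getLast hlast (hrot.mem_iff.1 hy) hyx
    have hy' : l.formPerm y = y' := by
      rw [List.formPerm_eq_of_isRotated h.nodup hrot]
      exact formPerm_apply_middle hc.nodup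
    rw [hy'] at hadj
    have e : s ++ y :: y' :: t = (s ++ [y]) ++ (y' :: t) := by simp
    rw [e] at hc hPd' hlast hhead hlen
    have hc' := hc.cross (x := x) (y := y) (z := l.formPerm x) (y' := y') (u := u) (w := w) (P := P)
      (by
        rw [List.head?_append_of_ne_nil _ (by simp)] at hhead
        exact hhead) (by simp) (by simp)
      (by
        rw [List.getLast?_append_of_ne_nil _ (by simp)] at hlast
        exact hlast) hP hPc hPu hPw hPd' hxu hyw.symm hadj
    have := hmax _ hc'
    simp only [List.length_append, List.length_reverse] at this hlen
    omega

theorem exists_isHamiltonianCycle [Fintype V] {l : List V} (h : G.IsCyclicList l)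
    (hl : ∀ v, v ∈ l) (hV : 3 ≤ Fintype.card V) :
    ∃ (a : V) (c : G.Walk a a), c.IsHamiltonianCycle := by
  have hlen : l.length = Fintype.card V := by
    rw [← List.toFinset_card_of_nodup h.nodup, ← Finset.card_univ]
    congr 1
    ext v; simp [hl v]
  have hne : l ≠ [] := by rintro rfl; simp at hlen; omega
  have hadj := h.closing _ (List.getLast_mem_getLast? hne) _ (List.head_mem_head? hne)
  refine ⟨_, .cons hadj (.ofSupport l hne h.isChain), ?_⟩
  rw [Walk.isHamiltonianCycle_iff_isCycle_and_length_eq, Walk.isCycle_iff_isPath_tail_and_le_length]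
  simp [Walk.isPath_def, h.nodup, Walk.length_ofSupport]
  omega

end IsCyclicList

theorem exists_longest_isCyclicList [Fintype V] {u v : V} (huv : G.Adj u v) :
    ∃ l, G.IsCyclicList l ∧ l ≠ [] ∧ ∀ l', G.IsCyclicList l' → l'.length ≤ l.length := by
  have h2 : G.IsCyclicList [u, v] := ⟨by simp [huv.ne], by simp [huv], by simp [huv.symm]⟩
  have hbd : ∀ l, G.IsCyclicList l → l.length ≤ Fintype.card V := fun l hl =>
    hl.nodup.length_le_card
  have hne : {m | ∃ l, G.IsCyclicList l ∧ l.length = m}.Nonempty := ⟨_, _, h2, rfl⟩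
  have hbdd : BddAbove {m | ∃ l, G.IsCyclicList l ∧ l.length = m} := by
    refine ⟨Fintype.card V, ?_⟩
    rintro _ ⟨l, hl, rfl⟩
    exact hbd l hl
  obtain ⟨l, hl, hlen⟩ := Nat.sSup_mem hne hbdd
  have hmax : ∀ l', G.IsCyclicList l' → l'.length ≤ l.length := fun l' hl' =>
    hlen ▸ le_csSup hbdd ⟨l', hl', rfl⟩
  refine ⟨l, hl, ?_, hmax⟩
  rintro rfl
  simpa using hmax _ h2

/-- Reachability inside an induced subgraph yields a list of distinct vertices forming a path. -/
theorem exists_path_list_of_reachable_induce {s : Set V} {u w : s}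
    (h : (G.induce s).Reachable u w) :
    ∃ P : List V, P.Nodup ∧ P.IsChain G.Adj ∧ P.head? = some u.1 ∧ P.getLast? = some w.1 ∧
      ∀ v ∈ P, v ∈ s := by
  obtain ⟨p, hp⟩ := h.exists_isPath
  refine ⟨p.support.map Subtype.val, hp.support_nodup.map Subtype.val_injective, ?_, ?_, ?_, ?_⟩
  · rw [List.isChain_map]
    exact p.isChain_adj_support
  · rw [List.head?_map, List.head?_eq_some_head p.support_ne_nil]
    simp
  · rw [List.getLast?_map, List.getLast?_eq_some_getLast p.support_ne_nil]
    simp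
  · simp +contextual

/-- The **Chvátal–Erdős theorem**: a graph in which no set of fewer than `k` vertices separates
the rest, and in which no `k` vertices are independent, is Hamiltonian. -/
theorem exists_isHamiltonianCycle_of_connectivity_of_independence [Fintype V] [DecidableEq V]
    (k : ℕ) (hV : 3 ≤ Fintype.card V)
    (hconn : ∀ A S : Finset V, A.Nonempty → Disjoint A S → A ∪ S ≠ Finset.univ → S.card < k →
      ∃ u ∈ A, ∃ w, w ∉ A ∪ S ∧ G.Adj u w)
    (hind : ∀ I : Finset V, I.card = k → ∃ u ∈ I, ∃ w ∈ I, G.Adj u w) :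
    ∃ (a : V) (c : G.Walk a a), c.IsHamiltonianCycle := by
  classical
  have hk : 0 < k := by
    rw [Nat.pos_iff_ne_zero]
    rintro rfl
    simpa using hind ∅ rfl
  obtain ⟨v₀⟩ : Nonempty V := Fintype.card_pos_iff.1 (by omega)
  obtain ⟨u₀, w₀, h₀⟩ : ∃ u w, G.Adj u w := by
    obtain ⟨u, -, w, -, h⟩ := hconn {v₀} ∅ (by simp) (by simp)
      (fun h => by
        have := congrArg Finset.card h
        simp at this
        omega) (by simpa)
    exact ⟨u, w, h⟩
  obtain ⟨l, hl, hne, hmax⟩ := exists_longest_isCyclicList h₀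
  by_cases hall : ∀ v, v ∈ l
  · exact hl.exists_isHamiltonianCycle hall hV
  push Not at hall
  obtain ⟨v, hv⟩ := hall
  exfalso
  let s : Set V := {x | x ∉ l}
  let H : Finset V := {u | ∃ hu : u ∈ s, (G.induce s).Reachable ⟨v, hv⟩ ⟨u, hu⟩}
  let N : Finset V := {x | x ∈ l ∧ ∃ u ∈ H, G.Adj x u}
  have hHl : ∀ u ∈ H, u ∉ l := fun u hu => (Finset.mem_filter.1 hu).2.1
  have hH : ∀ u ∈ (H : Set V), ∀ w ∈ (H : Set V), ∃ P : List V, P.Nodup ∧ P.IsChain G.Adj ∧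
      P.head? = some u ∧ P.getLast? = some w ∧ ∀ v ∈ P, v ∉ l := by
    intro u hu w hw
    obtain ⟨hu1, hu2⟩ := (Finset.mem_filter.1 hu).2
    obtain ⟨hw1, hw2⟩ := (Finset.mem_filter.1 hw).2
    exact exists_path_list_of_reachable_induce (hu2.symm.trans hw2)
  have hstep : ∀ u ∈ H, ∀ w, G.Adj u w → w ∈ H ∪ N := by
    intro u hu w huw
    rw [Finset.mem_union]
    by_cases hw : w ∈ l
    · exact Or.inr (Finset.mem_filter.2 ⟨Finset.mem_univ _, hw, u, hu, huw.symm⟩)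
    · obtain ⟨hu1, hu2⟩ := (Finset.mem_filter.1 hu).2
      refine Or.inl (Finset.mem_filter.2 ⟨Finset.mem_univ _, hw, hu2.trans ?_⟩)
      exact Adj.reachable (by simpa using huw)
  have hsucc : ∀ x ∈ N, ∀ y ∈ N,
      y ≠ l.formPerm x ∧ ¬ G.Adj (l.formPerm x) (l.formPerm y) := by
    intro x hx y hy
    obtain ⟨-, hx1, u, hu, hxu⟩ := Finset.mem_filter.1 hx
    obtain ⟨-, hy1, w, hw, hyw⟩ := Finset.mem_filter.1 hy
    exact hl.not_adj_of_maximal hmax H hH hx1 hy1 hu hxu hw hyw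
  have hNcard : k ≤ N.card := by
    by_contra! hlt
    obtain ⟨u, hu, w, hw, huw⟩ := hconn H N
      ⟨v, Finset.mem_filter.2 ⟨Finset.mem_univ _, hv, Reachable.refl _⟩⟩
      (Finset.disjoint_left.2 fun x hx hx' => hHl x hx (Finset.mem_filter.1 hx').2.1)
      (fun huniv => by
        obtain ⟨x, hx⟩ := List.exists_mem_of_ne_nil l hne
        have mem_N : ∀ y ∈ l, y ∈ N := fun y hy =>
          (Finset.mem_union.1 (huniv ▸ Finset.mem_univ y)).resolve_left fun h => hHl y h hy
        exact (hsucc x (mem_N x hx) _ (mem_N _ (List.formPerm_apply_mem_of_mem hx))).1 rfl)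
      hlt
    exact hw (hstep u hu w huw)
  obtain ⟨N', hN', hN'card⟩ := Finset.exists_subset_card_eq hNcard
  obtain ⟨a, ha, b, hb, hab⟩ := hind (N'.image l.formPerm)
    (by rw [Finset.card_image_of_injective _ l.formPerm.injective, hN'card])
  obtain ⟨x, hx, rfl⟩ := Finset.mem_image.1 ha
  obtain ⟨y, hy, rfl⟩ := Finset.mem_image.1 hb
  exact (hsucc x (hN' hx) y (hN' hy)).2 hab

end SimpleGraph

namespace SimpleGraph

open Finset

variable {V : Type*} [DecidableEq V] {G : SimpleGraph V}

/-- The pairs of distinct vertices of `I`. -/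
def pairsIn (I : Finset V) : Finset (Sym2 V) := I.offDiag.image (Function.uncurry Sym2.mk)

/-- The pairs with one vertex in `A` and one vertex in `B`. -/
def pairsBetween (A B : Finset V) : Finset (Sym2 V) := (A ×ˢ B).image (Function.uncurry Sym2.mk)

theorem card_pairsIn (I : Finset V) : #(pairsIn I) = (#I).choose 2 := Sym2.card_image_offDiag I

theorem card_pairsBetween {A B : Finset V} (h : Disjoint A B) :
    #(pairsBetween A B) = #A * #B := by
  rw [pairsBetween, card_image_of_injOn, card_product]
  rintro ⟨a, b⟩ hab ⟨a', b'⟩ hab' heq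
  rw [mem_coe, mem_product] at hab hab'
  rcases Sym2.eq_iff.1 heq with ⟨h1, h2⟩ | ⟨h1, h2⟩
  · exact Prod.ext h1 h2
  · exact absurd (h1 ▸ hab.1) (Finset.disjoint_right.1 h hab'.2)

theorem pairsBetween_comm (A B : Finset V) : pairsBetween A B = pairsBetween B A := by
  ext e
  simp only [pairsBetween, mem_image, mem_product, Prod.exists, Function.uncurry_apply_pair]
  constructor <;> rintro ⟨a, b, ⟨ha, hb⟩, rfl⟩ <;> exact ⟨b, a, ⟨hb, ha⟩, Sym2.eq_swap⟩

theorem not_isDiag_of_mem_pairsIn {I : Finset V} {e : Sym2 V} (he : e ∈ pairsIn I) :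
    ¬ e.IsDiag := by
  obtain ⟨⟨a, b⟩, hab, rfl⟩ := mem_image.1 he
  exact (mem_offDiag.1 hab).2.2

theorem not_isDiag_of_mem_pairsBetween {A B : Finset V} (h : Disjoint A B) {e : Sym2 V}
    (he : e ∈ pairsBetween A B) : ¬ e.IsDiag := by
  obtain ⟨⟨a, b⟩, hab, rfl⟩ := mem_image.1 he
  rw [mem_product] at hab
  rintro (rfl : a = b)
  exact Finset.disjoint_left.1 h hab.1 hab.2

namespace Walk

theorem IsCycle.card_darts_fst_mem_le {a : V} {c : G.Walk a a}
    (hc : c.IsCycle) (I : Finset V) : #{d ∈ c.darts.toFinset | d.fst ∈ I} ≤ #I := by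
  refine card_le_card_of_injOn (fun d => d.fst) (fun d hd => (mem_filter.1 hd).2) ?_
  have hnd : (c.darts.map (·.fst)).Nodup := by
    rw [map_fst_darts]; exact hc.nodup_dropLast_support
  intro d hd d' hd' heq
  simp only [coe_filter, List.mem_toFinset, Set.mem_ofPred_eq] at hd hd'
  exact List.inj_on_of_nodup_map hnd hd.1 hd'.1 heq

theorem IsCycle.card_darts_snd_mem_le {a : V} {c : G.Walk a a}
    (hc : c.IsCycle) (I : Finset V) : #{d ∈ c.darts.toFinset | d.snd ∈ I} ≤ #I := by
  refine card_le_card_of_injOn (fun d => d.snd) (fun d hd => (mem_filter.1 hd).2) ?_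
  have hnd : (c.darts.map (·.snd)).Nodup := by
    rw [map_snd_darts]; exact hc.support_nodup
  intro d hd d' hd' heq
  simp only [coe_filter, List.mem_toFinset, Set.mem_ofPred_eq] at hd hd'
  exact List.inj_on_of_nodup_map hnd hd.1 hd'.1 heq

/-- A cycle has at most `#I` edges inside a vertex set `I`. -/
theorem IsCycle.card_pairsIn_inter_edges_le {a : V} {c : G.Walk a a} (hc : c.IsCycle)
    (I : Finset V) : #(pairsIn I ∩ c.edges.toFinset) ≤ #I := by
  classical
  refine le_trans (card_le_card ?_) ((card_image_le (f := Dart.edge)).trans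
    (hc.card_darts_fst_mem_le I))
  intro e he
  simp only [mem_inter, List.mem_toFinset, Walk.edges, List.mem_map] at he
  obtain ⟨he1, d, hd, rfl⟩ := he
  refine mem_image_of_mem _ (mem_filter.2 ⟨List.mem_toFinset.2 hd, ?_⟩)
  obtain ⟨⟨x, y⟩, hxy, heq⟩ := mem_image.1 he1
  rw [mem_offDiag] at hxy
  have : d.fst ∈ s(x, y) := by
    rw [show s(x, y) = s(d.fst, d.snd) from heq]; exact Sym2.mem_mk_left _ _
  rcases Sym2.mem_iff.1 this with h | h <;> rw [h]
  exacts [hxy.1, hxy.2.1]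

/-- A cycle has at most `2 * #A` edges leaving a vertex set `A`. -/
theorem IsCycle.card_pairsBetween_inter_edges_le {a : V} {c : G.Walk a a}
    (hc : c.IsCycle) (A B : Finset V) : #(pairsBetween A B ∩ c.edges.toFinset) ≤ 2 * #A := by
  classical
  have hsub : pairsBetween A B ∩ c.edges.toFinset ⊆
      ({d ∈ c.darts.toFinset | d.fst ∈ A} ∪ {d ∈ c.darts.toFinset | d.snd ∈ A}).image
        Dart.edge := by
    intro e he
    simp only [mem_inter, List.mem_toFinset, Walk.edges, List.mem_map] at he
    obtain ⟨he1, d, hd, rfl⟩ := he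
    refine mem_image_of_mem _ ?_
    obtain ⟨⟨x, y⟩, hxy, heq⟩ := mem_image.1 he1
    rw [mem_product] at hxy
    have : x ∈ s(d.fst, d.snd) := by
      rw [← show s(x, y) = s(d.fst, d.snd) from heq]; exact Sym2.mem_mk_left _ _
    rw [mem_union, mem_filter, mem_filter, List.mem_toFinset]
    rcases Sym2.mem_iff.1 this with h | h
    · exact Or.inl ⟨hd, h ▸ hxy.1⟩
    · exact Or.inr ⟨hd, h ▸ hxy.1⟩
  have h1 := hc.card_darts_fst_mem_le A
  have h2 := hc.card_darts_snd_mem_le A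
  have := (card_le_card hsub).trans (card_image_le.trans (card_union_le _ _))
  omega

end Walk

/-- If the Hamilton cycles already found cannot be supplemented by a further one, the graph has a
`k`-set with few edges inside or a small vertex cut up to few edges. -/
theorem exists_sparse_pairs_of_not_extendable [Fintype V] (hV : 3 ≤ Fintype.card V) (k i : ℕ)
    (Q : Finset (Sym2 V))
    (hQI : ∀ I : Finset V, #(pairsIn I ∩ Q) ≤ i * #I)
    (hQA : ∀ A B : Finset V, #(pairsBetween A B ∩ Q) ≤ i * (2 * #A))
    (hG : ¬ ∃ (a : V) (c : (G.deleteEdges (Q : Set (Sym2 V))).Walk a a), c.IsHamiltonianCycle) :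
    (∃ I : Finset V, #I = k ∧ ∃ F ⊆ pairsIn I, #F ≤ i * k ∧
      ∀ e ∈ pairsIn I \ F, e ∉ G.edgeSet) ∨
    ∃ A S : Finset V, A.Nonempty ∧ Disjoint A S ∧ #S ≤ k ∧ 2 * #A + #S ≤ Fintype.card V ∧
      ∃ F ⊆ pairsBetween A (A ∪ S)ᶜ, #F ≤ i * (2 * #A) ∧
      ∀ e ∈ pairsBetween A (A ∪ S)ᶜ \ F, e ∉ G.edgeSet := by
  by_contra! hcon
  obtain ⟨hcon1, hcon2⟩ := hcon
  refine hG (exists_isHamiltonianCycle_of_connectivity_of_independence k hV ?_ ?_)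
  · intro A S hA hAS hne hS
    by_contra! hno
    have key : ∀ e ∈ pairsBetween A (A ∪ S)ᶜ, e ∉ Q → e ∉ G.edgeSet := by
      intro e he heQ heG
      obtain ⟨⟨x, y⟩, hxy, rfl⟩ := mem_image.1 he
      rw [mem_product, mem_compl] at hxy
      exact hno x hxy.1 y hxy.2 (by simpa [deleteEdges_adj] using ⟨heG, heQ⟩)
    have hcard : #A + #S + #(A ∪ S)ᶜ = Fintype.card V := by
      rw [← card_union_of_disjoint hAS, card_add_card_compl]
    rcases le_total (#A) (#(A ∪ S)ᶜ) with hle | hle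
    · obtain ⟨e, he, heG⟩ := hcon2 A S hA hAS hS.le (by omega) (pairsBetween A (A ∪ S)ᶜ ∩ Q)
        inter_subset_left (hQA _ _)
      rw [sdiff_inter_self_left, mem_sdiff] at he
      exact key e he.1 he.2 heG
    · have hB : (A ∪ S)ᶜ.Nonempty := by
        rwa [nonempty_iff_ne_empty, Ne, compl_eq_empty_iff]
      have hA' : ((A ∪ S)ᶜ ∪ S)ᶜ = A := by
        ext x
        have : x ∈ A → x ∉ S := fun h => Finset.disjoint_left.1 hAS h
        simp only [mem_compl, mem_union]
        tauto
      obtain ⟨e, he, heG⟩ := hcon2 (A ∪ S)ᶜ S hB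
        (Finset.disjoint_left.2 fun x hx hx' => (mem_compl.1 hx) (mem_union_right _ hx'))
        hS.le (by omega) (pairsBetween (A ∪ S)ᶜ ((A ∪ S)ᶜ ∪ S)ᶜ ∩ Q)
        inter_subset_left (hQA _ _)
      rw [sdiff_inter_self_left, mem_sdiff, hA', pairsBetween_comm] at he
      exact key e he.1 he.2 heG
  · intro I hI
    by_contra! hno
    obtain ⟨e, he, heG⟩ := hcon1 I hI (pairsIn I ∩ Q) inter_subset_left (hI ▸ hQI I)
    rw [sdiff_inter_self_left, mem_sdiff] at he
    obtain ⟨⟨x, y⟩, hxy, rfl⟩ := mem_image.1 he.1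
    rw [mem_offDiag] at hxy
    exact hno x hxy.1 y hxy.2.1 (by simpa [deleteEdges_adj] using ⟨heG, he.2⟩)

/-- A graph without `m + 1` edge-disjoint Hamilton cycles has a
`k`-set with few edges inside or a small vertex cut up to few edges. -/
theorem exists_sparse_pairs_of_not_hasEdgeDisjointHamCycles [Fintype V]
    (hV : 3 ≤ Fintype.card V) (k m : ℕ) (hG : ¬ G.HasEdgeDisjointHamCycles (m + 1)) :
    (∃ I : Finset V, #I = k ∧ ∃ F ⊆ pairsIn I, #F ≤ m * k ∧
      ∀ e ∈ pairsIn I \ F, e ∉ G.edgeSet) ∨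
    ∃ A S : Finset V, A.Nonempty ∧ Disjoint A S ∧ #S ≤ k ∧ 2 * #A + #S ≤ Fintype.card V ∧
      ∃ F ⊆ pairsBetween A (A ∪ S)ᶜ, #F ≤ m * (2 * #A) ∧
      ∀ e ∈ pairsBetween A (A ∪ S)ᶜ \ F, e ∉ G.edgeSet := by
  induction m with
  | zero =>
    refine exists_sparse_pairs_of_not_extendable hV k 0 ∅ (by simp) (by simp) ?_
    rintro ⟨a, c, hc⟩
    refine hG ⟨fun _ => ⟨a, c.map (.ofLE (deleteEdges_le _))⟩, fun _ =>
      hc.map (f := Hom.ofLE (deleteEdges_le _)) Function.bijective_id, ?_⟩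
    intro i j hij
    exact absurd (Subsingleton.elim (α := Fin 1) i j) hij
  | succ m ih =>
    by_cases hm : G.HasEdgeDisjointHamCycles (m + 1)
    · obtain ⟨c, hc, hdisj⟩ := hm
      refine exists_sparse_pairs_of_not_extendable hV k (m + 1)
        (univ.biUnion fun i => (c i).2.edges.toFinset) ?_ ?_ ?_
      · intro I
        rw [inter_biUnion]
        refine card_biUnion_le.trans ((sum_le_sum fun i _ =>
          (hc i).isCycle.card_pairsIn_inter_edges_le I).trans ?_)
        simp
      · intro A B
        rw [inter_biUnion]
        refine card_biUnion_le.trans ((sum_le_sum fun i _ =>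
          (hc i).isCycle.card_pairsBetween_inter_edges_le A B).trans ?_)
        simp
      · rintro ⟨a, d, hd⟩
        have hnew : ∀ e ∈ (d.map (.ofLE (deleteEdges_le _)) : G.Walk a a).edges,
            ∀ i, e ∉ (c i).2.edges := by
          intro e he i hei
          have he' : e ∈ d.edges := by simpa using he
          have := d.edges_subset_edgeSet he'
          simp only [edgeSet_deleteEdges, Set.mem_sdiff, coe_biUnion, Set.mem_iUnion, not_exists,
            mem_coe, List.mem_toFinset] at this
          exact this.2 i (mem_univ _) hei
        refine hG ⟨Fin.cons ⟨a, d.map (.ofLE (deleteEdges_le _))⟩ c, ?_, ?_⟩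
        · refine Fin.cases ?_ ?_
          · exact hd.map (f := Hom.ofLE (deleteEdges_le _)) Function.bijective_id
          · exact hc
        · refine Fin.cases ?_ fun i => ?_ <;> refine Fin.cases ?_ fun j => ?_
          · exact fun h => absurd rfl h
          · exact fun _ e he => hnew e he j
          · exact fun _ e he he' => hnew e he' i he
          · exact fun hij => hdisj i j fun h => hij (congrArg _ h)
    · rcases ih hm with ⟨I, hI, F, hF, hFc, h⟩ | ⟨A, S, hA, hAS, hS, hAc, F, hF, hFc, h⟩
      · exact Or.inl ⟨I, hI, F, hF, hFc.trans (Nat.mul_le_mul_right _ m.le_succ), h⟩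
      · exact Or.inr ⟨A, S, hA, hAS, hS, hAc, F, hF,
          hFc.trans (Nat.mul_le_mul_right _ m.le_succ), h⟩

end SimpleGraph

section RandomGraph

open Finset SimpleGraph

theorem Finset.card_powerset_filter_card_le {α : Type*} [DecidableEq α] (D : Finset α) (m : ℕ) :
    #{s ∈ D.powerset | #s ≤ m} ≤ (#D + 1) ^ m := by
  induction m with
  | zero =>
    refine (card_le_card (t := {∅}) fun s hs => ?_).trans (by simp)
    simp only [mem_filter, Nat.le_zero, card_eq_zero] at hs
    simp [hs.2]
  | succ m ih =>
    have hsub : {s ∈ D.powerset | #s ≤ m + 1} ⊆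
        ({s ∈ D.powerset | #s ≤ m} ×ˢ insertNone D).image
          fun x => x.2.elim x.1 fun a => insert a x.1 := by
      intro s hs
      simp only [mem_filter, mem_powerset] at hs
      rw [mem_image]
      rcases s.eq_empty_or_nonempty with rfl | ⟨a, ha⟩
      · exact ⟨(∅, none), by simp, rfl⟩
      · refine ⟨(s.erase a, some a), ?_, by simp [insert_erase ha]⟩
        simp only [mem_product, mem_filter, mem_powerset, some_mem_insertNone]
        exact ⟨⟨(erase_subset _ _).trans hs.1, by rw [card_erase_of_mem ha]; omega⟩, hs.1 ha⟩
    refine (card_le_card hsub).trans (card_image_le.trans ?_)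
    rw [card_product, card_insertNone, pow_succ]
    exact Nat.mul_le_mul_right _ ih

variable {n : ℕ} {p : ℝ}

theorem erProb_le_sum (hp0 : 0 ≤ p) (hp1 : p ≤ 1) {ι : Type*} (s : Finset ι)
    {A : SimpleGraph (Fin n) → Prop} {B : ι → SimpleGraph (Fin n) → Prop}
    (h : ∀ G, A G → ∃ i ∈ s, B i G) : erProb n p A ≤ ∑ i ∈ s, erProb n p (B i) := by
  classical
  unfold erProb
  rw [sum_comm]
  refine sum_le_sum fun G _ => ?_
  have hw : 0 ≤ p ^ G.edgeSet.ncard * (1 - p) ^ (n.choose 2 - G.edgeSet.ncard) :=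
    mul_nonneg (pow_nonneg hp0 _) (pow_nonneg (sub_nonneg.2 hp1) _)
  have hterm : ∀ i, 0 ≤ if B i G then
      p ^ G.edgeSet.ncard * (1 - p) ^ (n.choose 2 - G.edgeSet.ncard) else 0 := fun i => by
    split_ifs <;> simp [hw]
  by_cases hA : A G
  · obtain ⟨i, hi, hB⟩ := h G hA
    refine le_trans ?_ (single_le_sum (fun i _ => hterm i) hi)
    simp [hA, hB]
  · simpa [hA] using sum_nonneg fun i _ => hterm i

theorem erProb_mono (hp0 : 0 ≤ p) (hp1 : p ≤ 1) {A B : SimpleGraph (Fin n) → Prop}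
    (h : ∀ G, A G → B G) : erProb n p A ≤ erProb n p B := by
  simpa using erProb_le_sum hp0 hp1 {()} (B := fun _ => B) fun G hG => ⟨(), by simp, h G hG⟩

theorem erProb_or_le (hp0 : 0 ≤ p) (hp1 : p ≤ 1) (A B : SimpleGraph (Fin n) → Prop) :
    erProb n p (fun G => A G ∨ B G) ≤ erProb n p A + erProb n p B := by
  have := erProb_le_sum hp0 hp1 univ (A := fun G => A G ∨ B G) (B := fun b => bif b then A else B)
    (fun G hG => by
      rcases hG with h | h
      · exact ⟨true, mem_univ _, h⟩
      · exact ⟨false, mem_univ _, h⟩)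
  simpa using this

theorem erProb_forall_notMem_edgeSet (n : ℕ) (p : ℝ) (T : Finset (Sym2 (Fin n)))
    (hT : ∀ e ∈ T, ¬ e.IsDiag) :
    erProb n p (fun G => ∀ e ∈ T, e ∉ G.edgeSet) = (1 - p) ^ #T := by
  classical
  let U : Finset (Sym2 (Fin n)) := (⊤ : SimpleGraph (Fin n)).edgeFinset
  have hU : #U = n.choose 2 := by
    rw [card_edgeFinset_top_eq_card_choose_two, Fintype.card_fin]
  have memU : ∀ e, e ∈ U ↔ ¬ e.IsDiag := fun e => by simp [U]
  have hTU : T ⊆ U := fun e he => (memU e).2 (hT e he)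
  have hcard : #(U \ T) + #T = n.choose 2 := by rw [card_sdiff_add_card_eq_card hTU, hU]
  have hbij : ∑ G : SimpleGraph (Fin n) with ∀ e ∈ T, e ∉ G.edgeSet,
      p ^ G.edgeSet.ncard * (1 - p) ^ (n.choose 2 - G.edgeSet.ncard) =
      ∑ s ∈ (U \ T).powerset, p ^ #s * (1 - p) ^ (n.choose 2 - #s) := by
    refine sum_bij' (fun G _ => G.edgeSet.toFinite.toFinset)
      (fun s _ => fromEdgeSet (s : Set (Sym2 (Fin n))))
      ?_ ?_ ?_ ?_ ?_
    · intro G hG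
      rw [mem_powerset]
      intro e he
      rw [Set.Finite.mem_toFinset] at he
      rw [mem_sdiff, memU]
      exact ⟨G.not_isDiag_of_mem_edgeSet he, fun heT => (mem_filter.1 hG).2 e heT he⟩
    · intro s hs
      rw [mem_powerset] at hs
      refine mem_filter.2 ⟨mem_univ _, fun e heT he => ?_⟩
      rw [edgeSet_fromEdgeSet] at he
      exact (mem_sdiff.1 (hs he.1)).2 heT
    · intro G hG
      simp
    · intro s hs
      rw [mem_powerset] at hs
      ext e
      rw [Set.Finite.mem_toFinset, edgeSet_fromEdgeSet]
      refine ⟨fun h => h.1, fun h => ⟨h, ?_⟩⟩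
      exact (memU e).1 (mem_sdiff.1 (hs h)).1
    · intro G hG
      rw [← Set.ncard_coe_finset]
      simp
  have hfilter : erProb n p (fun G => ∀ e ∈ T, e ∉ G.edgeSet) =
      ∑ G : SimpleGraph (Fin n) with ∀ e ∈ T, e ∉ G.edgeSet,
        p ^ G.edgeSet.ncard * (1 - p) ^ (n.choose 2 - G.edgeSet.ncard) := by
    rw [sum_filter, erProb]
    congr!
  rw [hfilter, hbij]
  calc _ = ∑ s ∈ (U \ T).powerset, (p ^ #s * (1 - p) ^ (#(U \ T) - #s)) * (1 - p) ^ #T := by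
        refine sum_congr rfl fun s hs => ?_
        have := card_le_card (mem_powerset.1 hs)
        rw [mul_assoc, ← pow_add]
        congr 2
        omega
    _ = (1 - p) ^ #T := by
        rw [← sum_mul, sum_pow_mul_eq_add_pow]
        simp

/-- The probability that all but at most `m` of the pairs in `D` are non-edges. -/
theorem erProb_sparse_le (hp0 : 0 ≤ p) (hp1 : p ≤ 1) (D : Finset (Sym2 (Fin n)))
    (hD : ∀ e ∈ D, ¬ e.IsDiag) (m : ℕ) :
    erProb n p (fun G => ∃ F ⊆ D, #F ≤ m ∧ ∀ e ∈ D \ F, e ∉ G.edgeSet) ≤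
      (#D + 1 : ℝ) ^ m * (1 - p) ^ (#D - m) := by
  refine (erProb_le_sum hp0 hp1 {F ∈ D.powerset | #F ≤ m}
    (B := fun F G => ∀ e ∈ D \ F, e ∉ G.edgeSet) ?_).trans ?_
  · rintro G ⟨F, hF, hFm, h⟩
    exact ⟨F, mem_filter.2 ⟨mem_powerset.2 hF, hFm⟩, h⟩
  have hterm : ∀ F ∈ ({F ∈ D.powerset | #F ≤ m} : Finset _),
      erProb n p (fun G => ∀ e ∈ D \ F, e ∉ G.edgeSet) ≤ (1 - p) ^ (#D - m) := by
    intro F hF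
    simp only [mem_filter, mem_powerset] at hF
    rw [erProb_forall_notMem_edgeSet _ _ _ fun e he => hD e (mem_sdiff.1 he).1]
    refine pow_le_pow_of_le_one (sub_nonneg.2 hp1) (by linarith) ?_
    rw [card_sdiff_of_subset hF.1]
    omega
  refine (sum_le_card_nsmul _ _ _ hterm).trans ?_
  rw [nsmul_eq_mul]
  refine mul_le_mul_of_nonneg_right ?_ (pow_nonneg (sub_nonneg.2 hp1) _)
  exact_mod_cast card_powerset_filter_card_le D m

theorem card_univ_filter_card_le (n m : ℕ) :
    #{s : Finset (Fin n) | #s ≤ m} ≤ (n + 1) ^ m := by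
  simpa using card_powerset_filter_card_le (univ : Finset (Fin n)) m

theorem erProb_exists_sparse_set_le (hp0 : 0 ≤ p) (hp1 : p ≤ 1) (k m : ℕ) :
    erProb n p (fun G => ∃ I : Finset (Fin n), #I = k ∧ ∃ F ⊆ pairsIn I, #F ≤ m ∧
      ∀ e ∈ pairsIn I \ F, e ∉ G.edgeSet) ≤
      (n + 1 : ℝ) ^ k * ((k.choose 2 + 1 : ℝ) ^ m * (1 - p) ^ (k.choose 2 - m)) := by
  have h1p := sub_nonneg.2 hp1
  refine (erProb_le_sum hp0 hp1 {I : Finset (Fin n) | #I = k}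
    (B := fun I G => ∃ F ⊆ pairsIn I, #F ≤ m ∧ ∀ e ∈ pairsIn I \ F, e ∉ G.edgeSet) ?_).trans ?_
  · rintro G ⟨I, hI, h⟩
    exact ⟨I, by simpa using hI, h⟩
  refine (sum_le_card_nsmul _ _ ((k.choose 2 + 1 : ℝ) ^ m * (1 - p) ^ (k.choose 2 - m))
    ?_).trans ?_
  · intro I hI
    have hI' : #I = k := by simpa using hI
    have := erProb_sparse_le hp0 hp1 (pairsIn I) (fun e he => not_isDiag_of_mem_pairsIn he) m
    rwa [card_pairsIn, hI'] at this
  · rw [nsmul_eq_mul]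
    refine mul_le_mul_of_nonneg_right ?_ (by positivity)
    have : #{I : Finset (Fin n) | #I = k} ≤ (n + 1) ^ k :=
      (card_le_card (monotone_filter_right _ fun I _ h => h.le)).trans
        (card_univ_filter_card_le n k)
    exact_mod_cast this

theorem erProb_exists_sparse_cut_le (hp0 : 0 ≤ p) (hp1 : p ≤ 1) (k m : ℕ) :
    erProb n p (fun G => ∃ A S : Finset (Fin n), A.Nonempty ∧ Disjoint A S ∧ #S ≤ k ∧
      2 * #A + #S ≤ n ∧ ∃ F ⊆ pairsBetween A (A ∪ S)ᶜ, #F ≤ m * (2 * #A) ∧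
      ∀ e ∈ pairsBetween A (A ∪ S)ᶜ \ F, e ∉ G.edgeSet) ≤
      ∑ a ∈ Icc 1 (n / 2), (n + 1 : ℝ) ^ (a + k + 4 * m * a) *
        (1 - p) ^ (a * (n - a - k - 2 * m)) := by
  have h1p := sub_nonneg.2 hp1
  refine (erProb_le_sum hp0 hp1 (Icc 1 (n / 2)) (B := fun a G =>
    ∃ A S : Finset (Fin n), #A = a ∧ Disjoint A S ∧ #S ≤ k ∧
      ∃ F ⊆ pairsBetween A (A ∪ S)ᶜ, #F ≤ m * (2 * #A) ∧
      ∀ e ∈ pairsBetween A (A ∪ S)ᶜ \ F, e ∉ G.edgeSet) ?_).trans (sum_le_sum fun a ha => ?_)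
  · rintro G ⟨A, S, hA, hAS, hS, hn, h⟩
    have := hA.card_pos
    exact ⟨#A, mem_Icc.2 ⟨this, by omega⟩, A, S, rfl, hAS, hS, h⟩
  have han : a ≤ n := by rw [mem_Icc] at ha; omega
  refine (erProb_le_sum hp0 hp1
    {x ∈ ({A : Finset (Fin n) | #A = a} : Finset _) ×ˢ
      ({S : Finset (Fin n) | #S ≤ k} : Finset _) | Disjoint x.1 x.2}
    (B := fun x G => ∃ F ⊆ pairsBetween x.1 (x.1 ∪ x.2)ᶜ, #F ≤ m * (2 * #x.1) ∧
      ∀ e ∈ pairsBetween x.1 (x.1 ∪ x.2)ᶜ \ F, e ∉ G.edgeSet) ?_).trans ?_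
  · rintro G ⟨A, S, hA, hAS, hS, h⟩
    exact ⟨(A, S), by simp [hA, hAS, hS], h⟩
  refine (sum_le_card_nsmul _ _ ((n + 1 : ℝ) ^ (4 * m * a) *
    (1 - p) ^ (a * (n - a - k - 2 * m))) ?_).trans ?_
  · rintro ⟨A, S⟩ hx
    simp only [mem_filter, mem_product, mem_univ, true_and] at hx
    obtain ⟨⟨hA, hS⟩, hAS⟩ := hx
    have hdisj : Disjoint A (A ∪ S)ᶜ :=
      Finset.disjoint_left.2 fun x hx hx' => mem_compl.1 hx' (mem_union_left _ hx)
    have hB : #(A ∪ S)ᶜ = n - (a + #S) := by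
      rw [card_compl, card_union_of_disjoint hAS, hA, Fintype.card_fin]
    have := erProb_sparse_le hp0 hp1 (pairsBetween A (A ∪ S)ᶜ)
      (fun e he => not_isDiag_of_mem_pairsBetween hdisj he) (m * (2 * #A))
    refine this.trans ?_
    rw [card_pairsBetween hdisj, hB, hA]
    refine mul_le_mul ?_ ?_ (by positivity) (by positivity)
    · have hle : ((a * (n - (a + #S)) : ℕ) + 1 : ℝ) ≤ (n + 1 : ℝ) ^ 2 := by
        have h1 : a * (n - (a + #S)) ≤ n * n := Nat.mul_le_mul han (Nat.sub_le _ _)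
        have h2 : ((a * (n - (a + #S)) : ℕ) : ℝ) ≤ n * n := by exact_mod_cast h1
        nlinarith [(Nat.cast_nonneg n : (0 : ℝ) ≤ n)]
      refine (pow_le_pow_left₀ (by positivity) hle _).trans (le_of_eq ?_)
      rw [← pow_mul]
      congr 1
      ring
    · refine pow_le_pow_of_le_one h1p (by linarith) ?_
      rw [show m * (2 * a) = a * (2 * m) by ring, ← Nat.mul_sub]
      exact Nat.mul_le_mul_left _ (by omega)
  · rw [nsmul_eq_mul, pow_add _ (a + k), mul_assoc (_ ^ (a + k))]
    refine mul_le_mul_of_nonneg_right ?_ (by positivity)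
    have h1 : #{A : Finset (Fin n) | #A = a} ≤ (n + 1) ^ a :=
      (card_le_card (monotone_filter_right _ fun I _ h => h.le)).trans
        (card_univ_filter_card_le n a)
    have h2 := card_univ_filter_card_le n k
    have := (card_filter_le (({A : Finset (Fin n) | #A = a} : Finset _) ×ˢ
      ({S : Finset (Fin n) | #S ≤ k} : Finset _)) (fun x => Disjoint x.1 x.2)).trans_eq
      (card_product _ _)
    have := this.trans (Nat.mul_le_mul h1 h2)
    rw [← pow_add] at this
    exact_mod_cast this

theorem erProb_le_one (hp0 : 0 ≤ p) (hp1 : p ≤ 1) (A : SimpleGraph (Fin n) → Prop) :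
    erProb n p A ≤ 1 := by
  have := erProb_forall_notMem_edgeSet n p ∅ (by simp)
  rw [card_empty, pow_zero] at this
  rw [← this]
  exact erProb_mono hp0 hp1 (by simp)

theorem erProb_not_hasEdgeDisjointHamCycles_le (hp0 : 0 ≤ p) (hp1 : p ≤ 1) (hn : 3 ≤ n)
    (k m : ℕ) :
    erProb n p (fun G => ¬ G.HasEdgeDisjointHamCycles (m + 1)) ≤
      (n + 1 : ℝ) ^ k * ((k.choose 2 + 1 : ℝ) ^ (m * k) * (1 - p) ^ (k.choose 2 - m * k)) +
      ∑ a ∈ Icc 1 (n / 2), (n + 1 : ℝ) ^ (a + k + 4 * m * a) *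
        (1 - p) ^ (a * (n - a - k - 2 * m)) := by
  refine (erProb_mono hp0 hp1 fun G hG =>
    exists_sparse_pairs_of_not_hasEdgeDisjointHamCycles (by simpa using hn) k m hG).trans
    ((erProb_or_le hp0 hp1 _ _).trans (add_le_add (erProb_exists_sparse_set_le hp0 hp1 k _) ?_))
  simpa only [Fintype.card_fin] using erProb_exists_sparse_cut_le hp0 hp1 k m

theorem pow_le_erProb_not_hasEdgeDisjointHamCycles (hp0 : 0 ≤ p) (hp1 : p ≤ 1) (hn : 1 ≤ n)
    {r : ℕ} (hr : 1 ≤ r) :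
    (1 - p) ^ n ≤ erProb n p (fun G => ¬ G.HasEdgeDisjointHamCycles r) := by
  let v : Fin n := ⟨0, hn⟩
  have hdisj : Disjoint {v} ({v}ᶜ : Finset (Fin n)) := disjoint_compl_right
  have h := erProb_forall_notMem_edgeSet n p (pairsBetween {v} {v}ᶜ)
    fun e he => not_isDiag_of_mem_pairsBetween hdisj he
  rw [card_pairsBetween hdisj, card_compl, card_singleton, Fintype.card_fin, one_mul] at h
  calc (1 - p) ^ n ≤ (1 - p) ^ (n - 1) :=
        pow_le_pow_of_le_one (sub_nonneg.2 hp1) (by linarith) (by omega)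
    _ = _ := h.symm
    _ ≤ _ := erProb_mono hp0 hp1 ?_
  rintro G hG ⟨c, hc, -⟩
  have hcyc := hc ⟨0, hr⟩
  have hiso : ∀ w, ¬ G.Adj v w := fun w hw =>
    hG s(v, w) (mem_image.2 ⟨(v, w), by simpa using hw.ne', rfl⟩) hw
  have hrot := hcyc.rotate (hcyc.mem_support v)
  exact hiso _ (Walk.adj_snd hrot.not_nil)

/-- The contribution of the sparse `k`-sets to the union bound. -/
theorem sparse_set_bound {n k m : ℕ} {L s ℓ : ℝ} (hs : 1000 ≤ s) (hsn : s ^ 2 = n) (hL : 0 ≤ L)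
    (hℓ : 0 ≤ ℓ) (hlog : (2 * n : ℝ) ≤ Real.exp (1.01 * ℓ))
    (hk1 : 1.5 * s ≤ k) (hk2 : (k : ℝ) ≤ 1.6 * s) (hm : ((m : ℝ) + 1) ≤ s / 200) :
    (n + 1 : ℝ) ^ k * ((k.choose 2 + 1 : ℝ) ^ (m * k) * Real.exp (-L) ^ (k.choose 2 - m * k)) ≤
      Real.exp (-(L * n) + 1.7 * ((m + 1) * s * ℓ)) := by
  have hm0 : (0 : ℝ) ≤ m := m.cast_nonneg
  have hn1 : (n + 1 : ℝ) ≤ 2 * n := by nlinarith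
  have hc1 : (k.choose 2 + 1 : ℝ) ≤ 2 * n := by
    rw [Nat.cast_choose_two]
    nlinarith
  have hc2 : n + m * k ≤ k.choose 2 := by
    have : (n + m * k : ℝ) ≤ (k.choose 2 : ℕ) := by
      rw [Nat.cast_choose_two]
      nlinarith [mul_le_mul_of_nonneg_right hm (by linarith : (0 : ℝ) ≤ k)]
    exact_mod_cast this
  have h1 : (n + 1 : ℝ) ^ k ≤ Real.exp (1.01 * ℓ) ^ k :=
    pow_le_pow_left₀ (by positivity) (hn1.trans hlog) _
  have h2 : (k.choose 2 + 1 : ℝ) ^ (m * k) ≤ Real.exp (1.01 * ℓ) ^ (m * k) :=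
    pow_le_pow_left₀ (by positivity) (hc1.trans hlog) _
  have h3 : Real.exp (-L) ^ (k.choose 2 - m * k) ≤ Real.exp (-L) ^ n :=
    pow_le_pow_of_le_one (Real.exp_nonneg _) (Real.exp_le_one_iff.2 (by linarith)) (by omega)
  calc _ ≤ Real.exp (1.01 * ℓ) ^ k * (Real.exp (1.01 * ℓ) ^ (m * k) * Real.exp (-L) ^ n) := by
        gcongr
    _ = Real.exp (-(L * n) + 1.01 * ℓ * ((m + 1) * k)) := by
        rw [← Real.exp_nat_mul, ← Real.exp_nat_mul, ← Real.exp_nat_mul, ← Real.exp_add,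
          ← Real.exp_add]
        push_cast
        ring_nf
    _ ≤ _ := by
        rw [Real.exp_le_exp]
        have := mul_le_mul_of_nonneg_left hk2 (by positivity : 0 ≤ ℓ * ((m : ℝ) + 1))
        have h0 : 0 ≤ ℓ * ((m : ℝ) + 1) * s := by positivity
        linarith

/-- The contribution to the union bound of the sparse cuts cutting off `a` vertices. -/
theorem sparse_cut_bound {n k m a : ℕ} {L s ℓ : ℝ} (hs : 1000 ≤ s) (hsn : s ^ 2 = n) (hL : 0 ≤ L)
    (hℓ : 0 ≤ ℓ) (hlog : (2 * n : ℝ) ≤ Real.exp (1.01 * ℓ)) (hLℓ : L ≤ ℓ / 100)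
    (hk2 : (k : ℝ) ≤ 1.6 * s) (hm : ((m : ℝ) + 1) ≤ s / 200)
    (hLs : 2 * (m + 1) * ℓ ≤ L * s) (ha1 : 1 ≤ a) (ha2 : 2 * a ≤ n) :
    (n + 1 : ℝ) ^ (a + k + 4 * m * a) * Real.exp (-L) ^ (a * (n - a - k - 2 * m)) ≤
      Real.exp (-(L * n) + 1.7 * ((m + 1) * s * ℓ)) := by
  have hm0 : (0 : ℝ) ≤ m := m.cast_nonneg
  have hn1 : (n + 1 : ℝ) ≤ 2 * n := by nlinarith
  have ha1' : (1 : ℝ) ≤ a := by exact_mod_cast ha1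
  have ha2' : 2 * (a : ℝ) ≤ n := by exact_mod_cast ha2
  have hgap : (n : ℝ) / 4 ≤ n - a - 1 - k - 2 * m := by nlinarith
  have hle : a + k + 2 * m ≤ n := by
    have : (a + k + 2 * m : ℝ) ≤ n := by linarith [(Nat.cast_nonneg n : (0 : ℝ) ≤ n)]
    exact_mod_cast this
  have hcast : ((n - a - k - 2 * m : ℕ) : ℝ) = n - a - k - 2 * m := by
    rw [Nat.sub_sub, Nat.sub_sub, ← add_assoc, Nat.cast_sub hle]
    push_cast
    ring
  have h1 : (n + 1 : ℝ) ^ (a + k + 4 * m * a) ≤ Real.exp (1.01 * ℓ) ^ (a + k + 4 * m * a) :=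
    pow_le_pow_left₀ (by positivity) (hn1.trans hlog) _
  calc _ ≤ Real.exp (1.01 * ℓ) ^ (a + k + 4 * m * a) *
          Real.exp (-L) ^ (a * (n - a - k - 2 * m)) := by gcongr
    _ = Real.exp (-(L * n) + ((1 + 4 * m + k) * (1.01 * ℓ) + L * (1 + k + 2 * m)) +
          (a - 1) * ((1 + 4 * m) * (1.01 * ℓ) - L * (n - a - 1 - k - 2 * m))) := by
        rw [← Real.exp_nat_mul, ← Real.exp_nat_mul, ← Real.exp_add, Nat.cast_mul, hcast]
        push_cast
        ring_nf
    _ ≤ _ := by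
        rw [Real.exp_le_exp]
        have hRℓ : 0 ≤ ((m : ℝ) + 1) * ℓ := by positivity
        have hmℓ : 0 ≤ (m : ℝ) * ℓ := by positivity
        have hcut : (1 + 4 * m) * (1.01 * ℓ) - L * (n - a - 1 - k - 2 * m) ≤ 0 := by
          have e1 := mul_le_mul_of_nonneg_left hgap hL
          have e2 : 2 * (m + 1) * ℓ * s ≤ L * n := by
            rw [← hsn]; nlinarith
          have e3 := mul_le_mul_of_nonneg_left hs hRℓ
          nlinarith
        have hfirst : (1 + 4 * m + k) * (1.01 * ℓ) ≤ 1.65 * ((m + 1) * s * ℓ) := by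
          have e1 : (1 + 4 * m + k : ℝ) ≤ 1.604 * ((m + 1) * s) := by nlinarith
          nlinarith [mul_le_mul_of_nonneg_right e1 hℓ,
            (by positivity : 0 ≤ ((m : ℝ) + 1) * s * ℓ)]
        have hsecond : L * (1 + k + 2 * m) ≤ 0.02 * ((m + 1) * s * ℓ) := by
          have e1 : (1 + k + 2 * m : ℝ) ≤ 1.604 * ((m + 1) * s) := by nlinarith
          have e2 := mul_le_mul hLℓ e1 (by positivity) (by positivity)
          nlinarith [(by positivity : 0 ≤ ((m : ℝ) + 1) * s * ℓ)]
        have hprod := mul_nonpos_of_nonneg_of_nonpos (sub_nonneg.2 ha1') hcut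
        have : 0 ≤ ((m : ℝ) + 1) * s * ℓ := by positivity
        linarith

theorem erProb_not_hasEdgeDisjointHamCycles_le_exp {n m : ℕ} {p ε c : ℝ} (hε0 : 0 < ε)
    (hp0 : 0 ≤ p) (hp1 : p ≤ 1 - ε) (hc : 2 < c) (hs : 1000 ≤ √(n : ℝ))
    (hℓ : 100 * (1 - Real.log ε) ≤ Real.log n) (hℓ1 : 100 ≤ Real.log n) :
    erProb n p (fun G => ¬ G.HasEdgeDisjointHamCycles (m + 1)) ≤
      (1 - p) ^ n * Real.exp (c * (m + 1) * √(n : ℝ) * Real.log n) := by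
  have hp1' : p ≤ 1 := by linarith
  have hpos : 0 < 1 - p := by linarith
  obtain ⟨L, hL⟩ : ∃ L, L = -Real.log (1 - p) := ⟨_, rfl⟩
  have hexp : 1 - p = Real.exp (-L) := by rw [hL, neg_neg, Real.exp_log hpos]
  have hL0 : 0 ≤ L := by
    rw [hL, Left.nonneg_neg_iff]
    exact Real.log_nonpos hpos.le (by linarith)
  have hLε : L ≤ -Real.log ε := by
    rw [hL, neg_le_neg_iff]
    exact Real.log_le_log hε0 (by linarith)
  have hsn : √(n : ℝ) ^ 2 = n := Real.sq_sqrt n.cast_nonneg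
  generalize hs' : √(n : ℝ) = s at *
  generalize hℓ' : Real.log n = ℓ at *
  have hnpos : (0 : ℝ) < n := by nlinarith
  have hℓ0 : 0 ≤ ℓ := by linarith
  have hLℓ : L ≤ ℓ / 100 := by linarith
  have hRsℓ : 100000 ≤ ((m : ℝ) + 1) * s * ℓ := by
    have : 1000 * 100 ≤ s * ℓ := mul_le_mul hs hℓ1 (by norm_num) (by linarith)
    nlinarith [(Nat.cast_nonneg m : (0 : ℝ) ≤ m)]
  have hrhs : (1 - p) ^ n * Real.exp (c * (m + 1) * s * ℓ) =
      Real.exp (-(L * n) + c * ((m + 1) * s * ℓ)) := by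
    rw [hexp, ← Real.exp_nat_mul, ← Real.exp_add]
    ring_nf
  rw [hrhs]
  rcases lt_or_ge (L * n) (c * ((m + 1) * s * ℓ)) with htriv | hmain
  · exact (erProb_le_one hp0 hp1' _).trans (Real.one_le_exp (by linarith))
  have hLs : 2 * (m + 1) * ℓ ≤ L * s := by
    have : (2 * (m + 1) * ℓ) * s ≤ (L * s) * s := by
      rw [← hsn] at hmain
      nlinarith
    exact le_of_mul_le_mul_right this (by linarith)
  have hm : ((m : ℝ) + 1) ≤ s / 200 := by
    have : ((m : ℝ) + 1) * ℓ ≤ s / 200 * ℓ := by nlinarith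
    exact le_of_mul_le_mul_right this (by linarith)
  have hlog : (2 * n : ℝ) ≤ Real.exp (1.01 * ℓ) := by
    have h2 : (2 : ℝ) ≤ Real.exp (0.01 * ℓ) := by
      linarith [Real.add_one_le_exp (0.01 * ℓ)]
    have hn : (n : ℝ) = Real.exp ℓ := by rw [← hℓ', Real.exp_log hnpos]
    calc (2 * n : ℝ) ≤ Real.exp (0.01 * ℓ) * Real.exp ℓ := by rw [hn]; gcongr
      _ = _ := by rw [← Real.exp_add]; ring_nf
  have hk1 : 1.5 * s ≤ (⌈1.5 * s⌉₊ : ℝ) := Nat.le_ceil _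
  have hk2 : (⌈1.5 * s⌉₊ : ℝ) ≤ 1.6 * s := by
    have := (Nat.ceil_lt_add_one (by positivity : 0 ≤ 1.5 * s)).le
    linarith
  have hn3 : 3 ≤ n := by
    have : (3 : ℝ) ≤ n := by nlinarith
    exact_mod_cast this
  refine (erProb_not_hasEdgeDisjointHamCycles_le hp0 hp1' hn3 ⌈1.5 * s⌉₊ m).trans ?_
  rw [hexp]
  have hset := sparse_set_bound hs hsn hL0 hℓ0 hlog hk1 hk2 hm
  have hcut := sum_le_card_nsmul (Icc 1 (n / 2))
    (fun a => (n + 1 : ℝ) ^ (a + ⌈1.5 * s⌉₊ + 4 * m * a) *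
      Real.exp (-L) ^ (a * (n - a - ⌈1.5 * s⌉₊ - 2 * m))) _ fun a ha =>
    sparse_cut_bound hs hsn hL0 hℓ0 hlog hLℓ hk2 hm hLs (mem_Icc.1 ha).1
      (by have := (mem_Icc.1 ha).2; omega)
  refine (add_le_add hset hcut).trans ?_
  rw [Nat.card_Icc, Nat.add_sub_cancel, nsmul_eq_mul, ← one_add_mul]
  have hcount : 1 + ((n / 2 : ℕ) : ℝ) ≤ 2 * n := by
    have h1 : ((n / 2 : ℕ) : ℝ) ≤ n := by exact_mod_cast Nat.div_le_self n 2
    nlinarith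
  calc _ ≤ Real.exp (1.01 * ℓ) * Real.exp (-(L * n) + 1.7 * ((m + 1) * s * ℓ)) := by
        gcongr
        exact hcount.trans hlog
    _ ≤ _ := by
        rw [← Real.exp_add, Real.exp_le_exp]
        have h1 : 1000 * ℓ ≤ (m + 1) * s * ℓ := by
          have : 1000 ≤ ((m : ℝ) + 1) * s := by nlinarith [(Nat.cast_nonneg m : (0 : ℝ) ≤ m)]
          exact mul_le_mul_of_nonneg_right this hℓ0
        nlinarith

end RandomGraph

theorem random_edge_disjoint_ham_cycles_failure_probability
    (ε : ℝ) (hε0 : 0 < ε) (hε1 : ε < 1)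
    (p : ℕ → ℝ) (hp0 : ∀ n, 0 ≤ p n) (hp1 : ∀ n, p n ≤ 1 - ε)
    (r : ℕ → ℕ) (hr : ∀ n, 1 ≤ r n) :
    (∀ n, 1 ≤ n →
      (1 - p n) ^ n ≤ erProb n (p n) (fun G => ¬ G.HasEdgeDisjointHamCycles (r n))) ∧
    (∀ c : ℝ, 2 < c → ∃ N : ℕ, ∀ n ≥ N,
      erProb n (p n) (fun G => ¬ G.HasEdgeDisjointHamCycles (r n)) ≤
        (1 - p n) ^ n * Real.exp (c * r n * Real.sqrt n * Real.log n)) := by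
  refine ⟨fun n hn => pow_le_erProb_not_hasEdgeDisjointHamCycles (hp0 n) (by linarith [hp1 n]) hn
    (hr n), fun c hc => ?_⟩
  have hsqrt : Filter.Tendsto (fun n : ℕ => √(n : ℝ)) Filter.atTop Filter.atTop :=
    Real.tendsto_sqrt_atTop.comp tendsto_natCast_atTop_atTop
  have hlog : Filter.Tendsto (fun n : ℕ => Real.log n) Filter.atTop Filter.atTop :=
    Real.tendsto_log_atTop.comp tendsto_natCast_atTop_atTop
  obtain ⟨N, hN⟩ := Filter.eventually_atTop.1 ((hsqrt.eventually_ge_atTop 1000).and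
    ((hlog.eventually_ge_atTop (100 * (1 - Real.log ε))).and (hlog.eventually_ge_atTop 100)))
  refine ⟨N, fun n hn => ?_⟩
  obtain ⟨h1, h2, h3⟩ := hN n hn
  obtain ⟨m, hm⟩ := Nat.exists_eq_add_of_le' (hr n)
  have := erProb_not_hasEdgeDisjointHamCycles_le_exp (m := m) hε0 (hp0 n) (hp1 n) hc h1 h2 h3
  rw [hm]
  push_cast
  exact this
end
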